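/- Let a₁, a₂ ≠ 0 be real numbers whose ratio satisfies a₂/a₁ < 0, a₂/a₁ = 1, or a₂/a₁ > 4, and let s > −3/4. Then there exist b ∈ (1/2, 1), ε > 0 and C > 0, depending only on s, b and b', such that for all σ ≥ 0, all b' ∈ [b, b+ε), and all Schwartz functions f, g on ℝ²: ‖∂_x(fg)‖_{X_{a₂}^{σ,s,b'−1}} ≤ C ‖f‖_{X_{a₁}^{σ,s,b}} ‖g‖_{X_{a₂}^{σ,s,b}}. -/

import Mathlib

open MeasureTheory Set Filter
open scoped ENNReal

/-- Space-time Fourier transform `f̂(τ,ξ) = ∫∫ e^{-i(tτ + xξ)} f(t,x) dt dx`. -/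
noncomputable def FT2 (f : ℝ → ℝ → ℂ) (τ ξ : ℝ) : ℂ :=
  ∫ t : ℝ, ∫ x : ℝ, Complex.exp (-Complex.I * (t * τ + x * ξ)) * f t x

/-- Gevrey–Bourgain norm `‖f‖_{X_a^{σ,s,b}}`, valued in `ℝ≥0∞`. -/
noncomputable def XNorm (a σ s b : ℝ) (f : ℝ → ℝ → ℂ) : ℝ≥0∞ :=
  (∫⁻ τ : ℝ, ∫⁻ ξ : ℝ, ENNReal.ofReal
      (Real.exp (2 * σ * |ξ|) * (1 + |ξ|) ^ (2 * s) *
        (1 + |τ - a * ξ ^ 3|) ^ (2 * b) * ‖FT2 f τ ξ‖ ^ 2)) ^ (1/2 : ℝ)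

open SchwartzMap FourierTransform in
/-- Fourier transform of a product of Schwartz functions is bounded by the convolution. -/
lemma fourier_mul_le {E : Type*} [NormedAddCommGroup E] [InnerProductSpace ℝ E]
    [FiniteDimensional ℝ E] [MeasurableSpace E] [BorelSpace E] (f g : 𝓢(E, ℂ)) (x : E) :
    ‖𝓕 (fun y => f y * g y) x‖ₑ ≤ ∫⁻ y, ‖𝓕 (f : E → ℂ) y‖ₑ * ‖𝓕 (g : E → ℂ) (x - y)‖ₑ := by
  have h1 : 𝓕 (fun y => f y * g y) x
      = SchwartzMap.convolution (ContinuousLinearMap.mul ℂ ℂ) (𝓕⁻ f) (𝓕⁻ g) (-x) := by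
    have : SchwartzMap.convolution (ContinuousLinearMap.mul ℂ ℂ) (𝓕⁻ f) (𝓕⁻ g)
        = 𝓕⁻ (pairing (ContinuousLinearMap.mul ℂ ℂ) f g) := by
      simp [SchwartzMap.convolution]
    rw [this, fourierInv_coe, Real.fourierInv_eq_fourier_neg, neg_neg]
    congr 1
  rw [h1, SchwartzMap.convolution_apply, MeasureTheory.convolution]
  refine (enorm_integral_le_lintegral_enorm _).trans ?_
  rw [← lintegral_neg_eq_self]
  refine lintegral_mono fun y => ?_
  simp only [ContinuousLinearMap.mul_apply', enorm_mul, fourierInv_coe,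
    Real.fourierInv_eq_fourier_neg, neg_neg]
  apply le_of_eq
  have e : -(-x - -y) = x - y := by simp [sub_eq_add_neg, add_comm]
  rw [e]

open SchwartzMap FourierTransform in
lemma FT2_eq_fourier (f : SchwartzMap (ℝ × ℝ) ℂ) (τ ξ : ℝ) :
    FT2 (fun t x => f (t, x)) τ ξ
      = 𝓕 (fun v : WithLp 2 (ℝ × ℝ) => f v.ofLp) (WithLp.toLp 2 ((2 * Real.pi)⁻¹ • (τ, ξ))) := by
  rw [Real.fourier_eq']
  have hp := WithLp.volume_preserving_ofLp ℝ ℝ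
  have he : MeasurableEmbedding (@WithLp.ofLp 2 (ℝ × ℝ)) :=
    (MeasurableEquiv.toLp 2 (ℝ × ℝ)).symm.measurableEmbedding
  have h2 := hp.integral_comp he (fun p : ℝ × ℝ =>
    Complex.exp (-Complex.I * (p.1 * τ + p.2 * ξ)) * f p)
  have h3 : ∀ v : WithLp 2 (ℝ × ℝ), Complex.exp (((-2 * Real.pi * inner ℝ v
      (WithLp.toLp 2 ((2 * Real.pi)⁻¹ • (τ, ξ))) : ℝ) : ℂ) * Complex.I) • f v.ofLp
      = Complex.exp (-Complex.I * ((v.ofLp).1 * τ + (v.ofLp).2 * ξ)) * f v.ofLp := by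
    intro v
    rw [smul_eq_mul]
    congr 2
    rw [WithLp.prod_inner_apply]
    have : (Real.pi : ℂ) ≠ 0 := by exact_mod_cast Real.pi_ne_zero
    simp
    field_simp
  rw [integral_congr_ae (Eventually.of_forall h3), h2, FT2]
  rw [Measure.volume_eq_prod, integral_prod]
  have := f.integrable (μ := volume)
  rw [← Measure.volume_eq_prod]
  refine (this.norm).mono' ?_ ?_
  · refine Continuous.aestronglyMeasurable ?_
    have := f.continuous
    fun_prop
  · refine Eventually.of_forall fun p => ?_
    rw [norm_mul, Complex.norm_exp]
    simp

open SchwartzMap FourierTransform in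
lemma FT2_mul_le (f g : SchwartzMap (ℝ × ℝ) ℂ) (τ ξ : ℝ) :
    ‖FT2 (fun t x => f (t, x) * g (t, x)) τ ξ‖ₑ ≤
      ∫⁻ p : ℝ × ℝ, ‖FT2 (fun t x => f (t, x)) p.1 p.2‖ₑ *
        ‖FT2 (fun t x => g (t, x)) (τ - p.1) (ξ - p.2)‖ₑ := by
  let e := WithLp.prodContinuousLinearEquiv 2 ℝ ℝ ℝ
  let F : 𝓢(WithLp 2 (ℝ × ℝ), ℂ) := compCLMOfContinuousLinearEquiv ℝ e f
  let G : 𝓢(WithLp 2 (ℝ × ℝ), ℂ) := compCLMOfContinuousLinearEquiv ℝ e g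
  have h1 := FT2_eq_fourier (pairing (ContinuousLinearMap.mul ℝ ℂ) f g) τ ξ
  simp only [pairing_apply_apply, ContinuousLinearMap.mul_apply'] at h1
  rw [h1]
  refine (fourier_mul_le F G _).trans ?_
  have hp := WithLp.volume_preserving_ofLp ℝ ℝ
  have he : MeasurableEmbedding (@WithLp.ofLp 2 (ℝ × ℝ)) :=
    (MeasurableEquiv.toLp 2 (ℝ × ℝ)).symm.measurableEmbedding
  set c : ℝ := 2 * Real.pi with hc
  have hc0 : c ≠ 0 := by positivity
  have hc1 : 1 ≤ c := by
    have := Real.pi_gt_three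
    rw [hc]; linarith
  have h2 := hp.lintegral_comp_emb he (fun p : ℝ × ℝ =>
    ‖FT2 (fun t x => f (t, x)) (c * p.1) (c * p.2)‖ₑ *
        ‖FT2 (fun t x => g (t, x)) (τ - c * p.1) (ξ - c * p.2)‖ₑ)
  have h3 : ∀ v : WithLp 2 (ℝ × ℝ), ‖𝓕 (F : _ → ℂ) v‖ₑ *
      ‖𝓕 (G : _ → ℂ) (WithLp.toLp 2 (c⁻¹ • (τ, ξ)) - v)‖ₑ
      = ‖FT2 (fun t x => f (t, x)) (c * v.ofLp.1) (c * v.ofLp.2)‖ₑ *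
        ‖FT2 (fun t x => g (t, x)) (τ - c * v.ofLp.1) (ξ - c * v.ofLp.2)‖ₑ := by
    intro v
    rw [FT2_eq_fourier, FT2_eq_fourier, ← hc]
    have e1 : WithLp.toLp 2 (c⁻¹ • (c * v.ofLp.1, c * v.ofLp.2)) = v := by
      apply WithLp.ofLp_injective
      ext <;> simp [hc0]
    have e2 : WithLp.toLp 2 (c⁻¹ • (τ - c * v.ofLp.1, ξ - c * v.ofLp.2))
        = WithLp.toLp 2 (c⁻¹ • (τ, ξ)) - v := by
      apply WithLp.ofLp_injective
      ext <;> simp <;> field_simp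
    rw [e1, e2]
    rfl
  rw [lintegral_congr h3, h2]
  set Φ : ℝ × ℝ → ℝ≥0∞ := fun p => ‖FT2 (fun t x => f (t, x)) p.1 p.2‖ₑ *
        ‖FT2 (fun t x => g (t, x)) (τ - p.1) (ξ - p.2)‖ₑ with hΦ
  have h4 : ∫⁻ p : ℝ × ℝ, Φ (c • p) = ENNReal.ofReal |(c ^ 2)⁻¹| * ∫⁻ p, Φ p := by
    have hm := Measure.map_addHaar_smul (volume : Measure (ℝ × ℝ)) hc0
    have hemb : MeasurableEmbedding (fun p : ℝ × ℝ => c • p) :=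
      (Homeomorph.smulOfNeZero c hc0).measurableEmbedding
    have := hemb.lintegral_map (μ := volume) Φ
    rw [← this]
    have hm' : Measure.map (fun p : ℝ × ℝ => c • p) volume = ENNReal.ofReal |(c ^ 2)⁻¹| • volume := by
      have : Module.finrank ℝ (ℝ × ℝ) = 2 := by simp
      rw [this] at hm
      exact hm
    rw [hm', lintegral_smul_measure, smul_eq_mul]
  have h5 : ENNReal.ofReal |(c ^ 2)⁻¹| ≤ 1 := by
    rw [← ENNReal.ofReal_one]
    apply ENNReal.ofReal_le_ofReal
    rw [abs_of_nonneg (by positivity)]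
    apply inv_le_one_of_one_le₀
    nlinarith
  calc _ = ∫⁻ p : ℝ × ℝ, Φ (c • p) := by simp [hΦ]
    _ = _ := h4
    _ ≤ 1 * ∫⁻ p, Φ p := by gcongr
    _ = _ := by simp [hΦ]

open SchwartzMap LineDeriv in
lemma FT2_deriv (h : SchwartzMap (ℝ × ℝ) ℂ) (τ ξ : ℝ) :
    ‖FT2 (fun t x => deriv (fun y => h (t, y)) x) τ ξ‖ₑ
      = ENNReal.ofReal |ξ| * ‖FT2 (fun t x => h (t, x)) τ ξ‖ₑ := by
  have hd : ∀ t x, HasDerivAt (fun y => h (t, y)) ((∂_{((0:ℝ),(1:ℝ))} h : 𝓢(ℝ × ℝ, ℂ)) (t, x)) x := by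
    intro t x
    rw [lineDerivOp_apply_eq_fderiv]
    have h1 : HasFDerivAt h (fderiv ℝ h (t, x)) (t, x) := (h.differentiableAt).hasFDerivAt
    have h2 : HasDerivAt (fun y : ℝ => (t, y)) ((0:ℝ), (1:ℝ)) x :=
      (hasDerivAt_const x t).prodMk (hasDerivAt_id x)
    exact h1.comp_hasDerivAt x h2
  have key : FT2 (fun t x => deriv (fun y => h (t, y)) x) τ ξ
      = (Complex.I * ξ) * FT2 (fun t x => h (t, x)) τ ξ := by
    have i1 := (h.integrable (μ := volume))
    have i2 := ((∂_{((0:ℝ),(1:ℝ))} h : 𝓢(ℝ × ℝ, ℂ)).integrable (μ := volume))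
    rw [Measure.volume_eq_prod] at i1 i2
    unfold FT2
    rw [← integral_const_mul]
    refine integral_congr_ae ?_
    filter_upwards [i1.prod_right_ae, i2.prod_right_ae] with t j1 j2
    have hIntg : ∀ v : ℝ → ℂ, Integrable v → Integrable
        ((fun x : ℝ => Complex.exp (-Complex.I * (t * τ + x * ξ))) * v) := by
      intro v hv
      refine hv.bdd_mul (c := 1) ?_ ?_
      · refine Continuous.aestronglyMeasurable ?_
        fun_prop
      · refine Eventually.of_forall fun p => ?_
        rw [Complex.norm_exp]
        simp
    have hu : ∀ x : ℝ, HasDerivAt (fun x : ℝ => Complex.exp (-Complex.I * (t * τ + x * ξ)))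
        (Complex.exp (-Complex.I * (t * τ + x * ξ)) * (-Complex.I * ξ)) x := by
      intro x
      apply HasDerivAt.cexp
      have : HasDerivAt (fun x : ℝ => (x : ℂ)) 1 x := Complex.ofRealCLM.hasDerivAt
      simpa using ((this.mul_const (ξ : ℂ)).const_add ((t : ℂ) * τ)).const_mul (-Complex.I)
    have := integral_mul_deriv_eq_deriv_mul_of_integrable
      (u := fun x : ℝ => Complex.exp (-Complex.I * (t * τ + x * ξ)))
      (v := fun x => h (t, x)) (u' := fun x : ℝ => Complex.exp (-Complex.I * (t * τ + x * ξ)) * (-Complex.I * ξ))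
      (v' := fun x => (∂_{((0:ℝ),(1:ℝ))} h : 𝓢(ℝ × ℝ, ℂ)) (t, x))
      (fun x _ => hu x) (fun x _ => hd t x) (hIntg _ j2)
      (by
        have := (hIntg _ j1).const_mul (-Complex.I * ξ)
        refine this.congr (Eventually.of_forall fun x => ?_)
        simp only [Pi.mul_apply]
        ring) (hIntg _ j1)
    simp only [(hd t _).deriv]
    rw [this, ← integral_const_mul, ← integral_neg]
    congr 1
    ext x
    ring
  rw [key, enorm_mul, enorm_mul]
  congr 1
  rw [← ofReal_norm, ← ofReal_norm]
  simp

open SchwartzMap in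
lemma FT2_deriv_mul_le (f g : SchwartzMap (ℝ × ℝ) ℂ) (τ ξ : ℝ) :
    ‖FT2 (fun t x => deriv (fun y => f (t, y) * g (t, y)) x) τ ξ‖ₑ ≤
      ENNReal.ofReal |ξ| * ∫⁻ p : ℝ × ℝ, ‖FT2 (fun t x => f (t, x)) p.1 p.2‖ₑ *
        ‖FT2 (fun t x => g (t, x)) (τ - p.1) (ξ - p.2)‖ₑ := by
  have h1 := FT2_deriv (pairing (ContinuousLinearMap.mul ℝ ℂ) f g) τ ξ
  simp only [pairing_apply_apply, ContinuousLinearMap.mul_apply'] at h1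
  rw [h1]
  gcongr
  exact FT2_mul_le f g τ ξ

open FourierTransform in
lemma measurable_FT2 (f : SchwartzMap (ℝ × ℝ) ℂ) :
    Measurable (fun p : ℝ × ℝ => FT2 (fun t x => f (t, x)) p.1 p.2) := by
  let e := WithLp.prodContinuousLinearEquiv 2 ℝ ℝ ℝ
  let F : SchwartzMap (WithLp 2 (ℝ × ℝ)) ℂ := SchwartzMap.compCLMOfContinuousLinearEquiv ℝ e f
  have : (fun p : ℝ × ℝ => FT2 (fun t x => f (t, x)) p.1 p.2)
      = fun p => (𝓕 F) (e.symm ((2 * Real.pi)⁻¹ • p)) := by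
    ext p
    rw [FT2_eq_fourier, SchwartzMap.fourier_coe]
    rfl
  rw [this]
  apply Continuous.measurable
  have := (𝓕 F).continuous
  fun_prop

/-- Cauchy–Schwarz for `ℝ≥0∞`-valued integrals. -/
lemma lint_CS {α : Type*} [MeasurableSpace α] {μ : Measure α} {f g : α → ℝ≥0∞}
    (hf : Measurable f) (hg : Measurable g) :
    ∫⁻ a, f a * g a ∂μ ≤ (∫⁻ a, f a ^ 2 ∂μ) ^ (1/2 : ℝ) * (∫⁻ a, g a ^ 2 ∂μ) ^ (1/2 : ℝ) := by
  have := ENNReal.lintegral_mul_le_Lp_mul_Lq μ Real.HolderConjugate.two_two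
    hf.aemeasurable hg.aemeasurable
  simpa using this

lemma half_sq (x : ℝ≥0∞) : (x ^ (1/2 : ℝ)) ^ 2 = x := by
  rw [← ENNReal.rpow_natCast, ← ENNReal.rpow_mul]; norm_num

lemma sq_half (x : ℝ≥0∞) : (x ^ 2) ^ (1/2 : ℝ) = x := by
  rw [← ENNReal.rpow_natCast, ← ENNReal.rpow_mul]; norm_num

/-- `L²` duality. -/
lemma lint_dual {α : Type*} [MeasurableSpace α] {μ : Measure α} [SigmaFinite μ] {f : α → ℝ≥0∞}
    (C : ℝ≥0∞)
    (h : ∀ g : α → ℝ≥0∞, Measurable g →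
      ∫⁻ a, f a * g a ∂μ ≤ C * (∫⁻ a, g a ^ 2 ∂μ) ^ (1/2 : ℝ)) :
    (∫⁻ a, f a ^ 2 ∂μ) ^ (1/2 : ℝ) ≤ C := by
  by_contra! hC
  have h1 : C ^ 2 < ∫⁻ a, f a ^ 2 ∂μ := by
    rw [← half_sq (∫⁻ a, f a ^ 2 ∂μ)]
    gcongr
  rw [lintegral_eq_nnreal] at h1
  simp only [lt_iSup_iff] at h1
  obtain ⟨φ, hφ, h1⟩ := h1
  rw [← SimpleFunc.lintegral_eq_lintegral] at h1
  obtain ⟨g, hg, hg2, hg3⟩ := exists_lt_lintegral_simpleFunc_of_lt_lintegral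
    (f := fun a => φ a) h1
  set I := ∫⁻ a, (g a : ℝ≥0∞) ∂μ with hI
  have hm : Measurable (fun a => ((g a : ℝ≥0∞)) ^ (1/2 : ℝ)) :=
    (g.measurable.coe_nnreal_ennreal).pow_const _
  have h2 := h _ hm
  simp only [half_sq] at h2
  have h3 : I ≤ ∫⁻ a, f a * ((g a : ℝ≥0∞)) ^ (1/2 : ℝ) ∂μ := by
    refine lintegral_mono fun a => ?_
    have h4 : ((g a : ℝ≥0∞)) ^ (1/2 : ℝ) ≤ f a := by
      rw [← sq_half (f a)]
      exact ENNReal.rpow_le_rpow ((ENNReal.coe_le_coe.2 (hg a)).trans (hφ a)) (by norm_num)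
    calc (g a : ℝ≥0∞) = ((g a : ℝ≥0∞)) ^ (1/2 : ℝ) * ((g a : ℝ≥0∞)) ^ (1/2 : ℝ) := by
          rw [← sq, half_sq]
      _ ≤ _ := by gcongr
  have h5 : I ≤ C * I ^ (1/2 : ℝ) := h3.trans h2
  have hI0 : I ≠ 0 := (lt_of_le_of_lt zero_le hg3).ne'
  have hIh0 : I ^ (1/2 : ℝ) ≠ 0 := by simpa using hI0
  have hIht : I ^ (1/2 : ℝ) ≠ ⊤ := by
    apply ENNReal.rpow_ne_top_of_nonneg (by norm_num) hg2.ne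
  have h6 : I ^ (1/2 : ℝ) ≤ C := by
    have h7 : I ^ (1/2 : ℝ) * I ^ (1/2 : ℝ) ≤ C * I ^ (1/2 : ℝ) := by
      rw [← sq, half_sq]; exact h5
    exact (ENNReal.mul_le_mul_iff_left hIh0 hIht).1 h7
  have h8 : I ≤ C ^ 2 := by
    rw [← half_sq I]; gcongr
  exact absurd hg3 (not_lt.2 h8)

lemma lint_CS2 {α β : Type*} [MeasurableSpace α] [MeasurableSpace β] {μ : Measure α}
    {ν : Measure β} [SFinite ν] {k Q : α → β → ℝ≥0∞} {P : α → ℝ≥0∞}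
    (hk : Measurable (Function.uncurry k)) (hQ : Measurable (Function.uncurry Q))
    (hP : Measurable P) (C : ℝ≥0∞) (hC : ∀ y, ∫⁻ x, k y x ^ 2 ∂ν ≤ C) :
    ∫⁻ y, P y * ∫⁻ x, k y x * Q y x ∂ν ∂μ ≤
      C ^ (1/2 : ℝ) * ((∫⁻ y, P y ^ 2 ∂μ) ^ (1/2 : ℝ) * (∫⁻ y, ∫⁻ x, Q y x ^ 2 ∂ν ∂μ) ^ (1/2 : ℝ)) := by
  have hky : ∀ y, Measurable (k y) := fun y => hk.comp measurable_prodMk_left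
  have hQy : ∀ y, Measurable (Q y) := fun y => hQ.comp measurable_prodMk_left
  have hR : Measurable (fun y => (∫⁻ x, Q y x ^ 2 ∂ν) ^ (1/2 : ℝ)) := by
    apply Measurable.pow_const
    exact Measurable.lintegral_prod_right (hQ.pow_const 2)
  calc ∫⁻ y, P y * ∫⁻ x, k y x * Q y x ∂ν ∂μ
      ≤ ∫⁻ y, C ^ (1/2 : ℝ) * (P y * (∫⁻ x, Q y x ^ 2 ∂ν) ^ (1/2 : ℝ)) ∂μ := by
        refine lintegral_mono fun y => ?_
        calc P y * ∫⁻ x, k y x * Q y x ∂ν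
            ≤ P y * ((∫⁻ x, k y x ^ 2 ∂ν) ^ (1/2 : ℝ) * (∫⁻ x, Q y x ^ 2 ∂ν) ^ (1/2 : ℝ)) := by
              gcongr
              exact lint_CS (hky y) (hQy y)
          _ ≤ P y * (C ^ (1/2 : ℝ) * (∫⁻ x, Q y x ^ 2 ∂ν) ^ (1/2 : ℝ)) := by
              gcongr
              exact hC y
          _ = _ := by ring
    _ = C ^ (1/2 : ℝ) * ∫⁻ y, (P y * (∫⁻ x, Q y x ^ 2 ∂ν) ^ (1/2 : ℝ)) ∂μ := by
        rw [lintegral_const_mul _ (by fun_prop)]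
    _ ≤ _ := by
        gcongr
        refine (lint_CS hP hR).trans ?_
        simp only [half_sq]
        exact le_rfl

/-- `∫∫ Q(x)² S(x-y)² = ‖Q‖² ‖S‖²` in square-root form. -/
lemma lint_conv_sq {Q S : ℝ × ℝ → ℝ≥0∞} (hQ : Measurable Q) (hS : Measurable S) :
    (∫⁻ x, ∫⁻ y, (Q y * S (x - y)) ^ 2) ^ (1/2 : ℝ)
      = (∫⁻ x, Q x ^ 2) ^ (1/2 : ℝ) * (∫⁻ x, S x ^ 2) ^ (1/2 : ℝ) := by
  rw [← ENNReal.mul_rpow_of_nonneg _ _ (by norm_num)]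
  congr 1
  rw [lintegral_lintegral_swap]
  · have : ∀ y, ∫⁻ x, (Q y * S (x - y)) ^ 2 = Q y ^ 2 * ∫⁻ x, S x ^ 2 := by
      intro y
      simp only [mul_pow]
      rw [lintegral_const_mul _ (by fun_prop), lintegral_sub_right_eq_self (fun x => S x ^ 2)]
    simp only [this]
    rw [lintegral_mul_const _ (by fun_prop)]
  · apply Measurable.aemeasurable
    unfold Function.uncurry
    fun_prop

lemma lint_tri {K₀ K₁ K₂ : ℝ × ℝ → ℝ × ℝ → ℝ≥0∞}
    (h₀ : Measurable (Function.uncurry K₀)) (h₁ : Measurable (Function.uncurry K₁))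
    (h₂ : Measurable (Function.uncurry K₂)) (C : ℝ≥0∞)
    (b₀ : ∀ x, ∫⁻ y, K₀ x y ^ 2 ≤ C) (b₁ : ∀ y, ∫⁻ x, K₁ x y ^ 2 ≤ C)
    (b₂ : ∀ z, ∫⁻ x, K₂ x (x - z) ^ 2 ≤ C)
    {F G : ℝ × ℝ → ℝ≥0∞} (hF : Measurable F) (hG : Measurable G) :
    (∫⁻ x, (∫⁻ y, (K₀ x y + K₁ x y + K₂ x y) * (F y * G (x - y))) ^ 2) ^ (1/2 : ℝ)
      ≤ 3 * C ^ (1/2 : ℝ) * ((∫⁻ x, F x ^ 2) ^ (1/2 : ℝ) * (∫⁻ x, G x ^ 2) ^ (1/2 : ℝ)) := by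
  apply lint_dual
  intro h hh
  have mh₀ : ∀ x, Measurable (K₀ x) := fun y => h₀.comp measurable_prodMk_left
  have mh₁ : ∀ x, Measurable (K₁ x) := fun y => h₁.comp measurable_prodMk_left
  have mh₂ : ∀ x, Measurable (K₂ x) := fun y => h₂.comp measurable_prodMk_left
  have mFG : ∀ x, Measurable (fun y => F y * G (x - y)) := fun x => by fun_prop
  set A := (∫⁻ x, F x ^ 2) ^ (1/2 : ℝ) with hA
  set B := (∫⁻ x, G x ^ 2) ^ (1/2 : ℝ) with hB
  set D := (∫⁻ x, h x ^ 2) ^ (1/2 : ℝ) with hD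
  have split : ∀ x, (∫⁻ y, (K₀ x y + K₁ x y + K₂ x y) * (F y * G (x - y))) * h x
      = h x * (∫⁻ y, K₀ x y * (F y * G (x - y))) + h x * (∫⁻ y, K₁ x y * (F y * G (x - y)))
        + h x * (∫⁻ y, K₂ x y * (F y * G (x - y))) := by
    intro x
    simp only [add_mul]
    rw [lintegral_add_right _ (by fun_prop), lintegral_add_right _ (by fun_prop)]
    ring
  simp only [split]
  have m0 : ∀ {K : ℝ × ℝ → ℝ × ℝ → ℝ≥0∞}, Measurable (Function.uncurry K) →
      Measurable (fun x => h x * (∫⁻ y, K x y * (F y * G (x - y)))) := by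
    intro K hK
    apply hh.mul
    apply Measurable.lintegral_prod_right
      (f := fun x y : ℝ × ℝ => K x y * (F y * G (x - y)))
    have : Measurable (fun p : (ℝ × ℝ) × (ℝ × ℝ) => K p.1 p.2) := hK
    unfold Function.uncurry
    fun_prop
  rw [lintegral_add_right _ (m0 h₂), lintegral_add_right _ (m0 h₁)]
  have t0 : ∫⁻ x, h x * (∫⁻ y, K₀ x y * (F y * G (x - y))) ≤ C ^ (1/2 : ℝ) * (D * (A * B)) := by
    have hQ : Measurable (Function.uncurry fun x y : ℝ × ℝ => F y * G (x - y)) := by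
      unfold Function.uncurry; fun_prop
    refine (lint_CS2 (k := K₀) (Q := fun x y => F y * G (x - y)) h₀ hQ hh C b₀).trans ?_
    rw [lint_conv_sq hF hG]
  have t1 : ∫⁻ x, h x * (∫⁻ y, K₁ x y * (F y * G (x - y))) ≤ C ^ (1/2 : ℝ) * (A * (D * B)) := by
    have e : ∫⁻ x, h x * (∫⁻ y, K₁ x y * (F y * G (x - y)))
        = ∫⁻ y, F y * (∫⁻ x, K₁ x y * (h x * G (x - y))) := by
      have e1 : ∀ x, h x * (∫⁻ y, K₁ x y * (F y * G (x - y)))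
          = ∫⁻ y, h x * (K₁ x y * (F y * G (x - y))) := by
        intro x
        rw [lintegral_const_mul _ (by fun_prop)]
      simp only [e1]
      have : Measurable (fun p : (ℝ × ℝ) × (ℝ × ℝ) => K₁ p.1 p.2) := h₁
      rw [lintegral_lintegral_swap]
      · refine lintegral_congr fun y => ?_
        have : Measurable (fun x => K₁ x y) := h₁.comp measurable_prodMk_right
        rw [← lintegral_const_mul _ (by fun_prop)]
        refine lintegral_congr fun x => ?_
        ring
      · apply Measurable.aemeasurable
        unfold Function.uncurry
        fun_prop
    rw [e]
    have hk : Measurable (Function.uncurry fun y x : ℝ × ℝ => K₁ x y) := h₁.comp measurable_swap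
    have hQ : Measurable (Function.uncurry fun y x : ℝ × ℝ => h x * G (x - y)) := by
      unfold Function.uncurry; fun_prop
    refine (lint_CS2 (k := fun y x => K₁ x y) (Q := fun y x => h x * G (x - y))
      hk hQ hF C b₁).trans ?_
    have e3 : ∀ y x : ℝ × ℝ, G (x - y) = (fun p => G (-p)) (y - x) := by
      intro y x; simp
    simp only [e3]
    have := lint_conv_sq (Q := h) (S := fun p => G (-p)) hh (by fun_prop)
    rw [this, lintegral_neg_eq_self (fun p => G p ^ 2)]
  have t2 : ∫⁻ x, h x * (∫⁻ y, K₂ x y * (F y * G (x - y))) ≤ C ^ (1/2 : ℝ) * (B * (D * A)) := by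
    have hk : Measurable (fun p : (ℝ × ℝ) × (ℝ × ℝ) => K₂ p.1 (p.1 - p.2)) :=
      h₂.comp (by fun_prop : Measurable fun p : (ℝ × ℝ) × (ℝ × ℝ) => (p.1, p.1 - p.2))
    have e : ∫⁻ x, h x * (∫⁻ y, K₂ x y * (F y * G (x - y)))
        = ∫⁻ z, G z * (∫⁻ x, K₂ x (x - z) * (h x * F (x - z))) := by
      have e1 : ∀ x, h x * (∫⁻ y, K₂ x y * (F y * G (x - y)))
          = ∫⁻ z, h x * (K₂ x (x - z) * (F (x - z) * G z)) := by
        intro x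
        rw [← lintegral_sub_left_eq_self (fun y => K₂ x y * (F y * G (x - y))) x]
        rw [lintegral_const_mul]
        · simp
        · have : Measurable (fun z => K₂ x (x - z)) := hk.comp measurable_prodMk_left
          fun_prop
      simp only [e1]
      rw [lintegral_lintegral_swap]
      · refine lintegral_congr fun y => ?_
        have : Measurable (fun x => K₂ x (x - y)) := hk.comp measurable_prodMk_right
        rw [← lintegral_const_mul _ (by fun_prop)]
        refine lintegral_congr fun x => ?_
        ring
      · apply Measurable.aemeasurable
        unfold Function.uncurry
        fun_prop
    rw [e]
    have hk' : Measurable (Function.uncurry fun z x : ℝ × ℝ => K₂ x (x - z)) :=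
      hk.comp measurable_swap
    have hQ : Measurable (Function.uncurry fun y x : ℝ × ℝ => h x * F (x - y)) := by
      unfold Function.uncurry; fun_prop
    refine (lint_CS2 (k := fun z x => K₂ x (x - z)) (Q := fun y x => h x * F (x - y))
      hk' hQ hG C b₂).trans ?_
    have e3 : ∀ y x : ℝ × ℝ, F (x - y) = (fun p => F (-p)) (y - x) := by
      intro y x; simp
    simp only [e3]
    have := lint_conv_sq (Q := h) (S := fun p => F (-p)) hh (by fun_prop)
    rw [this, lintegral_neg_eq_self (fun p => F p ^ 2)]
  calc _ ≤ C ^ (1/2 : ℝ) * (D * (A * B)) + C ^ (1/2 : ℝ) * (A * (D * B))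
        + C ^ (1/2 : ℝ) * (B * (D * A)) := by gcongr
    _ = _ := by ring

/-- The integral of the Japanese bracket. -/
noncomputable def JI (β : ℝ) : ℝ≥0∞ := ∫⁻ v : ℝ, ENNReal.ofReal ((1 + |v|) ^ (-β))

lemma JI_lt_top {β : ℝ} (hβ : 1 < β) : JI β < ⊤ := by
  have h := integrable_one_add_norm (E := ℝ) (μ := volume) (r := β) (by simpa using hβ)
  have := h.lintegral_lt_top
  simpa [JI] using this

lemma JI_shift (β t : ℝ) : ∫⁻ v : ℝ, ENNReal.ofReal ((1 + |v - t|) ^ (-β)) = JI β :=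
  lintegral_sub_right_eq_self (fun v : ℝ => ENNReal.ofReal ((1 + |v|) ^ (-β))) t

lemma bracket_meas (β : ℝ) : Measurable (fun v : ℝ => (1 + |v|) ^ (-β)) := by
  have : Measurable (fun v : ℝ => |v|) := measurable_norm
  exact (this.const_add 1).pow_const _

lemma bracket_prod {β : ℝ} (hβ : 0 ≤ β) (x y : ℝ) :
    (1 + |x|) ^ (-β) * (1 + |y|) ^ (-β)
      ≤ 2 ^ β * (1 + |x - y|) ^ (-β) * ((1 + |x|) ^ (-β) + (1 + |y|) ^ (-β)) := by
  have key : ∀ u v : ℝ, |u| ≤ |v| → (1 + |v|) ^ (-β) ≤ 2 ^ β * (1 + |u - v|) ^ (-β) := by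
    intro u v huv
    have h1 : 1 + |u - v| ≤ 2 * (1 + |v|) := by
      have := abs_sub u v
      linarith [abs_nonneg v]
    have h2 : (2 * (1 + |v|)) ^ (-β) ≤ (1 + |u - v|) ^ (-β) :=
      Real.rpow_le_rpow_of_nonpos (by positivity) h1 (by linarith)
    rw [Real.mul_rpow (by norm_num) (by positivity), Real.rpow_neg (by norm_num)] at h2
    have h3 : (0:ℝ) < 2 ^ β := by positivity
    calc (1 + |v|) ^ (-β) = 2 ^ β * ((2 ^ β)⁻¹ * (1 + |v|) ^ (-β)) := by field_simp
      _ ≤ _ := by gcongr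
  have hx : 0 ≤ (1 + |x|) ^ (-β) := by positivity
  have hy : 0 ≤ (1 + |y|) ^ (-β) := by positivity
  have hxy : 0 ≤ 2 ^ β * (1 + |x - y|) ^ (-β) := by positivity
  rcases le_total |x| |y| with h | h
  · have := key x y h
    nlinarith
  · have := key y x h
    rw [abs_sub_comm] at this
    nlinarith

lemma lint_bracket_prod {β : ℝ} (hβ : 0 ≤ β) (p t : ℝ) :
    ∫⁻ s : ℝ, ENNReal.ofReal ((1 + |s - p|) ^ (-β) * (1 + |s - t|) ^ (-β))
      ≤ ENNReal.ofReal (2 ^ β) * (2 * JI β) * ENNReal.ofReal ((1 + |t - p|) ^ (-β)) := by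
  have m : ∀ t, Measurable (fun s : ℝ => ENNReal.ofReal ((1 + |s - t|) ^ (-β))) := fun t =>
    ((bracket_meas β).comp (measurable_id.sub_const t)).ennreal_ofReal
  calc _ ≤ ∫⁻ s : ℝ, ENNReal.ofReal (2 ^ β) * ENNReal.ofReal ((1 + |t - p|) ^ (-β)) *
        (ENNReal.ofReal ((1 + |s - p|) ^ (-β)) + ENNReal.ofReal ((1 + |s - t|) ^ (-β))) := by
        refine lintegral_mono fun s => ?_
        rw [← ENNReal.ofReal_add (by positivity) (by positivity),
          ← ENNReal.ofReal_mul (by positivity), ← ENNReal.ofReal_mul (by positivity)]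
        apply ENNReal.ofReal_le_ofReal
        have := bracket_prod hβ (s - p) (s - t)
        simpa using this
    _ = _ := by
        have mp := m p
        have mt := m t
        rw [lintegral_const_mul _ (by fun_prop), lintegral_add_left (m p), JI_shift, JI_shift]
        ring

lemma lint_change_var {S : Set ℝ} (hS : MeasurableSet S) {φ φ' : ℝ → ℝ}
    (hφ : ∀ y, HasDerivAt φ (φ' y) y) (hinj : InjOn φ S) (β t : ℝ) :
    ∫⁻ y in S, ENNReal.ofReal |φ' y| * ENNReal.ofReal ((1 + |φ y - t|) ^ (-β)) ≤ JI β := by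
  have := lintegral_image_eq_lintegral_abs_deriv_mul hS (fun y _ => (hφ y).hasDerivWithinAt) hinj
    (fun v => ENNReal.ofReal ((1 + |v - t|) ^ (-β)))
  rw [← this, ← JI_shift β t]
  exact setLIntegral_le_lintegral _ _

lemma quad_mono (A B D : ℝ) : ∃ v : ℝ,
    (MonotoneOn (fun y => A * y ^ 2 + B * y + D) (Iio v) ∨
      AntitoneOn (fun y => A * y ^ 2 + B * y + D) (Iio v)) ∧
    (MonotoneOn (fun y => A * y ^ 2 + B * y + D) (Ici v) ∨
      AntitoneOn (fun y => A * y ^ 2 + B * y + D) (Ici v)) := by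
  rcases lt_trichotomy A 0 with h | h | h
  · refine ⟨-B / (2 * A), Or.inl ?_, Or.inr ?_⟩
    · intro x hx y hy hxy
      simp only [mem_Iio] at hx hy
      rw [lt_div_iff_of_neg (by linarith)] at hx hy
      nlinarith
    · intro x hx y hy hxy
      simp only [mem_Ici] at hx hy
      rw [div_le_iff_of_neg (by linarith)] at hx hy
      nlinarith
  · subst h
    rcases le_total 0 B with hB | hB
    · refine ⟨0, Or.inl ?_, Or.inl ?_⟩ <;> intro x _ y _ hxy <;> simp <;> nlinarith
    · refine ⟨0, Or.inr ?_, Or.inr ?_⟩ <;> intro x _ y _ hxy <;> simp <;> nlinarith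
  · refine ⟨-B / (2 * A), Or.inr ?_, Or.inl ?_⟩
    · intro x hx y hy hxy
      simp only [mem_Iio] at hx hy
      rw [lt_div_iff₀ (by linarith)] at hx hy
      nlinarith
    · intro x hx y hy hxy
      simp only [mem_Ici] at hx hy
      rw [div_le_iff₀ (by linarith)] at hx hy
      nlinarith

lemma inj_piece {φ φ' : ℝ → ℝ} (hφ : ∀ y, HasDerivAt φ (φ' y) y) {T : Set ℝ} (hT : OrdConnected T)
    (hm : MonotoneOn φ' T ∨ AntitoneOn φ' T) :
    InjOn φ (T ∩ {y | 0 < φ' y}) ∧ InjOn φ (T ∩ {y | φ' y < 0}) := by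
  have c1 : OrdConnected (T ∩ {y | 0 < φ' y}) := by
    constructor
    rintro x ⟨hx, hx'⟩ y ⟨hy, hy'⟩ z hz
    have hzT := hT.out hx hy hz
    refine ⟨hzT, ?_⟩
    rcases hm with hm | hm
    · exact lt_of_lt_of_le hx' (hm hx hzT hz.1)
    · exact lt_of_lt_of_le hy' (hm hzT hy hz.2)
  have c2 : OrdConnected (T ∩ {y | φ' y < 0}) := by
    constructor
    rintro x ⟨hx, hx'⟩ y ⟨hy, hy'⟩ z hz
    have hzT := hT.out hx hy hz
    refine ⟨hzT, ?_⟩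
    rcases hm with hm | hm
    · exact lt_of_le_of_lt (hm hzT hy hz.2) hy'
    · exact lt_of_le_of_lt (hm hx hzT hz.1) hx'
  have hc : Continuous φ := continuous_iff_continuousAt.2 fun y => (hφ y).continuousAt
  constructor
  · refine StrictMonoOn.injOn (strictMonoOn_of_deriv_pos c1.convex hc.continuousOn ?_)
    intro x hx
    rw [(hφ x).deriv]
    exact (interior_subset hx).2
  · refine StrictAntiOn.injOn (strictAntiOn_of_deriv_neg c2.convex hc.continuousOn ?_)
    intro x hx
    rw [(hφ x).deriv]
    exact (interior_subset hx).2

lemma lint_phase {φ : ℝ → ℝ} {A B D : ℝ}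
    (hφ : ∀ y, HasDerivAt φ (A * y ^ 2 + B * y + D) y) (β t : ℝ) :
    ∫⁻ y, ENNReal.ofReal |A * y ^ 2 + B * y + D| * ENNReal.ofReal ((1 + |φ y - t|) ^ (-β))
      ≤ 4 * JI β := by
  obtain ⟨v, h1, h2⟩ := quad_mono A B D
  set φ' : ℝ → ℝ := fun y => A * y ^ 2 + B * y + D with hφ'
  have hmeas : Measurable φ' := by fun_prop
  have i1 := inj_piece hφ ordConnected_Iio h1
  have i2 := inj_piece hφ ordConnected_Ici h2
  have p1 : MeasurableSet {y | 0 < φ' y} := measurableSet_lt measurable_const hmeas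
  have p2 : MeasurableSet {y | φ' y < 0} := measurableSet_lt hmeas measurable_const
  have q1 : MeasurableSet (Iio v ∩ {y | 0 < φ' y}) := measurableSet_Iio.inter p1
  have q2 : MeasurableSet (Iio v ∩ {y | φ' y < 0}) := measurableSet_Iio.inter p2
  have q3 : MeasurableSet (Ici v ∩ {y | 0 < φ' y}) := measurableSet_Ici.inter p1
  have q4 : MeasurableSet (Ici v ∩ {y | φ' y < 0}) := measurableSet_Ici.inter p2
  set f : ℝ → ℝ≥0∞ := fun y => ENNReal.ofReal |φ' y| * ENNReal.ofReal ((1 + |φ y - t|) ^ (-β))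
    with hf
  have hfm : Measurable f := by
    have hc : Continuous φ := continuous_iff_continuousAt.2 fun y => (hφ y).continuousAt
    have m1 : Measurable (fun y => ENNReal.ofReal |φ' y|) :=
      (measurable_norm.comp hmeas).ennreal_ofReal
    have m2 : Measurable (fun y => ENNReal.ofReal ((1 + |φ y - t|) ^ (-β))) :=
      ((bracket_meas β).comp (hc.measurable.sub_const t)).ennreal_ofReal
    exact m1.mul m2
  have r1 := lint_change_var q1 hφ i1.1 β t
  have r2 := lint_change_var q2 hφ i1.2 β t
  have r3 := lint_change_var q3 hφ i2.1 β t
  have r4 := lint_change_var q4 hφ i2.2 β t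
  change ∫⁻ y, f y ≤ _
  have : ∀ y, f y ≤ (Iio v ∩ {y | 0 < φ' y}).indicator f y + (Iio v ∩ {y | φ' y < 0}).indicator f y
      + ((Ici v ∩ {y | 0 < φ' y}).indicator f y + (Ici v ∩ {y | φ' y < 0}).indicator f y) := by
    intro y
    rcases lt_trichotomy (φ' y) 0 with h | h | h <;> rcases lt_or_ge y v with h' | h'
    · simp [indicator, h, h', h.not_gt, h'.not_ge]
    · simp [indicator, h, h', h.not_gt, h'.not_gt]
    · simp [hf, h]
    · simp [hf, h]
    · simp [indicator, h, h', h.not_gt, h'.not_ge]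
    · simp [indicator, h, h', h.not_gt, h'.not_gt]
  calc ∫⁻ y, f y ≤ _ := lintegral_mono this
    _ = ((∫⁻ y in (Iio v ∩ {y | 0 < φ' y}), f y) + (∫⁻ y in (Iio v ∩ {y | φ' y < 0}), f y))
      + ((∫⁻ y in (Ici v ∩ {y | 0 < φ' y}), f y) + (∫⁻ y in (Ici v ∩ {y | φ' y < 0}), f y)) := by
        have g1 := hfm.indicator q1
        have g2 := hfm.indicator q2
        rw [lintegral_add_left (by fun_prop),
          lintegral_add_left (hfm.indicator q1), lintegral_add_left (hfm.indicator q3),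
          lintegral_indicator q1, lintegral_indicator q2, lintegral_indicator q3,
          lintegral_indicator q4]
    _ ≤ (JI β + JI β) + (JI β + JI β) := by gcongr
    _ = _ := by ring

/-- The pointwise alternative for the weights. -/
def Good (C₀ α γ c₁ c₂ x y w : ℝ) : Prop :=
  w ≤ C₀ * |α * y ^ 2 - γ * (y - x) ^ 2| ∨
    (w ≤ C₀ * Real.sqrt (1 + |x|) ∧
      (|y - c₁ * x| ≤ C₀ / Real.sqrt (1 + |x|) ∨ |y - c₂ * x| ≤ C₀ / Real.sqrt (1 + |x|)))

lemma kernel_bound {β : ℝ} (hβ : 1 < β) {C₀ : ℝ} (hC₀ : 0 ≤ C₀) (α γ c₁ c₂ : ℝ) (t x : ℝ)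
    (W : ℝ → ℝ) (hW : Measurable W) (hW0 : ∀ y, 0 ≤ W y)
    (hgood : ∀ y, Good C₀ α γ c₁ c₂ x y (W y)) :
    ∫⁻ p : ℝ × ℝ, ENNReal.ofReal (W p.2 * ((1 + |p.1 - α * p.2 ^ 3|) ^ (-β) *
        (1 + |p.1 - t - γ * (p.2 - x) ^ 3|) ^ (-β)))
      ≤ ENNReal.ofReal (2 ^ β) * (2 * JI β) *
        (ENNReal.ofReal C₀ * (4 * JI β) + 4 * ENNReal.ofReal (C₀ ^ 2)) := by
  set M := Real.sqrt (1 + |x|) with hM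
  have hM0 : 0 < M := Real.sqrt_pos.2 (by positivity)
  set φ : ℝ → ℝ := fun y => α * y ^ 3 - γ * (y - x) ^ 3 with hφdef
  have hφ : ∀ y, HasDerivAt φ ((3 * (α - γ)) * y ^ 2 + (6 * γ * x) * y + (-3 * γ * x ^ 2)) y := by
    intro y
    have := (((hasDerivAt_id y).pow 3).const_mul α).sub
      ((((hasDerivAt_id y).sub_const x).pow 3).const_mul γ)
    refine HasDerivAt.congr_deriv (f := φ) this ?_
    simp
    ring
  have hm1 : Measurable (fun p : ℝ × ℝ => (1 + |p.1 - α * p.2 ^ 3|) ^ (-β)) :=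
    (bracket_meas β).comp (by fun_prop : Measurable fun p : ℝ × ℝ => p.1 - α * p.2 ^ 3)
  have hm2 : Measurable (fun p : ℝ × ℝ => (1 + |p.1 - t - γ * (p.2 - x) ^ 3|) ^ (-β)) :=
    (bracket_meas β).comp (by fun_prop : Measurable fun p : ℝ × ℝ => p.1 - t - γ * (p.2 - x) ^ 3)
  rw [Measure.volume_eq_prod, lintegral_prod_symm' _ (by fun_prop)]
  set E := ENNReal.ofReal (2 ^ β) * (2 * JI β) with hE
  set J : ℝ → ℝ≥0∞ := fun y => ENNReal.ofReal ((1 + |φ y - t|) ^ (-β)) with hJ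
  have hφm : Measurable φ := by fun_prop
  have hJm : Measurable J := ((bracket_meas β).comp (hφm.sub_const t)).ennreal_ofReal
  have hJ1 : ∀ y, J y ≤ 1 := by
    intro y
    rw [hJ, ← ENNReal.ofReal_one]
    apply ENNReal.ofReal_le_ofReal
    apply Real.rpow_le_one_of_one_le_of_nonpos
    · linarith [abs_nonneg (φ y - t)]
    · linarith
  have step1 : ∀ y, ∫⁻ s : ℝ, ENNReal.ofReal (W y * ((1 + |s - α * y ^ 3|) ^ (-β) *
        (1 + |s - t - γ * (y - x) ^ 3|) ^ (-β))) ≤ E * (ENNReal.ofReal (W y) * J y) := by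
    intro y
    have e : ∀ s : ℝ, s - t - γ * (y - x) ^ 3 = s - (t + γ * (y - x) ^ 3) := fun s => by ring
    simp only [ENNReal.ofReal_mul (hW0 y), e]
    have m1 : Measurable (fun s : ℝ => (1 + |s - α * y ^ 3|) ^ (-β)) :=
      (bracket_meas β).comp (by fun_prop : Measurable fun p : ℝ => p - α * y ^ 3)
    have m2 : Measurable (fun s : ℝ => (1 + |s - (t + γ * (y - x) ^ 3)|) ^ (-β)) :=
      (bracket_meas β).comp (by fun_prop : Measurable fun p : ℝ => p - (t + γ * (y - x) ^ 3))
    rw [lintegral_const_mul _ (by fun_prop)]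
    have := lint_bracket_prod (by linarith : 0 ≤ β) (α * y ^ 3) (t + γ * (y - x) ^ 3)
    calc _ ≤ ENNReal.ofReal (W y) * (E * ENNReal.ofReal
          ((1 + |t + γ * (y - x) ^ 3 - α * y ^ 3|) ^ (-β))) := by gcongr
      _ = _ := by
        have e : |t + γ * (y - x) ^ 3 - α * y ^ 3| = |φ y - t| := by
          rw [abs_sub_comm, hφdef]; congr 1; ring
        rw [e]; ring
  have step2 : ∀ y, ENNReal.ofReal (W y) * J y ≤
      ENNReal.ofReal C₀ * (ENNReal.ofReal |(3 * (α - γ)) * y ^ 2 + (6 * γ * x) * y + (-3 * γ * x ^ 2)|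
          * J y)
      + ((Metric.closedBall (c₁ * x) (C₀ / M)).indicator (fun _ => ENNReal.ofReal (C₀ * M)) y
        + (Metric.closedBall (c₂ * x) (C₀ / M)).indicator (fun _ => ENNReal.ofReal (C₀ * M)) y) := by
    intro y
    rcases hgood y with h | ⟨h, h' | h'⟩
    · refine le_trans ?_ (le_add_of_nonneg_right zero_le)
      rw [← mul_assoc, ← ENNReal.ofReal_mul hC₀]
      gcongr
      refine h.trans (mul_le_mul_of_nonneg_left ?_ hC₀)
      have e : (3 * (α - γ)) * y ^ 2 + (6 * γ * x) * y + (-3 * γ * x ^ 2)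
          = 3 * (α * y ^ 2 - γ * (y - x) ^ 2) := by ring
      rw [e, abs_mul, abs_of_pos (by norm_num : (0:ℝ) < 3)]
      linarith [abs_nonneg (α * y ^ 2 - γ * (y - x) ^ 2)]
    · refine le_trans ?_ (le_add_of_nonneg_left zero_le)
      refine le_trans ?_ (le_add_of_nonneg_right zero_le)
      rw [indicator_of_mem (by simpa [Real.dist_eq] using h')]
      calc _ ≤ ENNReal.ofReal (C₀ * M) * 1 := by
            gcongr
            exact hJ1 y
        _ = _ := mul_one _
    · refine le_trans ?_ (le_add_of_nonneg_left zero_le)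
      refine le_trans ?_ (le_add_of_nonneg_left zero_le)
      rw [indicator_of_mem (by simpa [Real.dist_eq] using h')]
      calc _ ≤ ENNReal.ofReal (C₀ * M) * 1 := by
            gcongr
            exact hJ1 y
        _ = _ := mul_one _
  have hind : ∀ c : ℝ, ∫⁻ y, (Metric.closedBall c (C₀ / M)).indicator
      (fun _ => ENNReal.ofReal (C₀ * M)) y = 2 * ENNReal.ofReal (C₀ ^ 2) := by
    intro c
    rw [lintegral_indicator Metric.isClosed_closedBall.measurableSet, setLIntegral_const,
      Real.volume_closedBall, ← ENNReal.ofReal_mul (by positivity),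
      ← ENNReal.ofReal_ofNat, ← ENNReal.ofReal_mul (by positivity)]
    congr 1
    field_simp
  calc _ ≤ ∫⁻ y, E * (ENNReal.ofReal (W y) * J y) := lintegral_mono step1
    _ = E * ∫⁻ y, (ENNReal.ofReal (W y) * J y) := lintegral_const_mul _ (by fun_prop)
    _ ≤ E * (ENNReal.ofReal C₀ * (4 * JI β) + (2 * ENNReal.ofReal (C₀ ^ 2)
          + 2 * ENNReal.ofReal (C₀ ^ 2))) := by
        gcongr
        refine (lintegral_mono step2).trans ?_
        have mi : ∀ c : ℝ, Measurable ((Metric.closedBall c (C₀ / M)).indicator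
            (fun _ => ENNReal.ofReal (C₀ * M))) := fun c =>
          measurable_const.indicator Metric.isClosed_closedBall.measurableSet
        have mi1 := mi (c₁ * x)
        have mi2 := mi (c₂ * x)
        rw [lintegral_add_right _ (by fun_prop), lintegral_add_right _ (mi _), hind, hind]
        gcongr
        have mq : Measurable (fun y : ℝ => ENNReal.ofReal
          |(3 * (α - γ)) * y ^ 2 + (6 * γ * x) * y + (-3 * γ * x ^ 2)|) :=
          (measurable_norm.comp (by fun_prop : Measurable fun y : ℝ =>
            (3 * (α - γ)) * y ^ 2 + (6 * γ * x) * y + (-3 * γ * x ^ 2))).ennreal_ofReal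
        rw [lintegral_const_mul _ (by fun_prop)]
        gcongr
        exact lint_phase hφ β t
    _ = _ := by ring

lemma neg_pow_anti {x y θ : ℝ} (hx : 0 < x) (hxy : x ≤ y) (hθ : 0 ≤ θ) : y ^ (-θ) ≤ x ^ (-θ) :=
  Real.rpow_le_rpow_of_nonpos hx hxy (by linarith)

/-- Trading modulation weights. -/
lemma modulation_trade {θ β k L L₁ L₂ : ℝ} (hθ : 0 ≤ θ) (hθβ : θ ≤ β) (hk : 0 < k)
    (hL : 1 ≤ L) (h₁ : 1 ≤ L₁) (h₂ : 1 ≤ L₂) (hmax : k ≤ L ∨ k ≤ L₁ ∨ k ≤ L₂) :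
    L ^ (-θ) * L₁ ^ (-β) * L₂ ^ (-β) ≤
      k ^ (-θ) * (L₁ ^ (-β) * L₂ ^ (-β) + L ^ (-β) * L₂ ^ (-β) + L ^ (-β) * L₁ ^ (-β)) := by
  have key : ∀ M : ℝ, 1 ≤ M → L ≤ M → k ≤ M →
      L ^ (-θ) * M ^ (-β) ≤ k ^ (-θ) * L ^ (-β) := by
    intro M hM hLM hkM
    have e1 : L ^ (-θ) = L ^ (-β) * L ^ (β - θ) := by
      rw [← Real.rpow_add (by linarith)]; congr 1; ring
    have e2 : M ^ (-θ) = M ^ (-β) * M ^ (β - θ) := by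
      rw [← Real.rpow_add (by linarith)]; congr 1; ring
    have h3 : L ^ (β - θ) ≤ M ^ (β - θ) :=
      Real.rpow_le_rpow (by linarith) hLM (by linarith)
    have h4 := neg_pow_anti hk hkM hθ
    have p1 : 0 ≤ L ^ (-β) := by positivity
    have p2 : 0 ≤ M ^ (-β) := by positivity
    calc L ^ (-θ) * M ^ (-β) = L ^ (-β) * (M ^ (-β) * L ^ (β - θ)) := by rw [e1]; ring
      _ ≤ L ^ (-β) * (M ^ (-β) * M ^ (β - θ)) := by gcongr
      _ = L ^ (-β) * M ^ (-θ) := by rw [← e2]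
      _ ≤ L ^ (-β) * k ^ (-θ) := by gcongr
      _ = _ := by ring
  have q0 : 0 ≤ L ^ (-β) := by positivity
  have q1 : 0 ≤ L₁ ^ (-β) := by positivity
  have q2 : 0 ≤ L₂ ^ (-β) := by positivity
  have q3 : 0 ≤ k ^ (-θ) := by positivity
  have r1 : 0 ≤ k ^ (-θ) * (L₁ ^ (-β) * L₂ ^ (-β)) := by positivity
  have r2 : 0 ≤ k ^ (-θ) * (L ^ (-β) * L₂ ^ (-β)) := by positivity
  have r3 : 0 ≤ k ^ (-θ) * (L ^ (-β) * L₁ ^ (-β)) := by positivity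
  by_cases hkL : k ≤ L
  · have h4 := neg_pow_anti hk hkL hθ
    have : L ^ (-θ) * (L₁ ^ (-β) * L₂ ^ (-β)) ≤ k ^ (-θ) * (L₁ ^ (-β) * L₂ ^ (-β)) := by gcongr
    linarith
  push Not at hkL
  rcases hmax with h | h | h
  · linarith
  · have := mul_le_mul_of_nonneg_right (key L₁ h₁ (by linarith) h) q2
    linarith
  · have := mul_le_mul_of_nonneg_right (key L₂ h₂ (by linarith) h) q1
    linarith

/-- The elementary frequency inequality in the high region. -/
lemma freq_high {δ c : ℝ} (hδ : 0 < δ) (hδ' : δ ≤ 1 / 20) (hc : 0 < c) {ξ ξ₁ ξ₂ : ℝ}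
    (hξ : ξ ≠ 0) (hsum : |ξ| ≤ |ξ₁| + |ξ₂|) (h₁ : 1 ≤ |ξ₁|) (h₂ : 1 ≤ |ξ₂|) :
    |ξ| ^ 2 * (((1 + |ξ₁|) * (1 + |ξ₂|)) / (1 + |ξ|)) ^ (3 / 2 - 3 * δ) *
        (c * (|ξ| * |ξ₁| * |ξ₂|)) ^ (-(1 - δ))
      ≤ c ^ (-(1 - δ)) * 4 * (min 1 |ξ| * (2 + |ξ₁| + |ξ₂|) / Real.sqrt (1 + |ξ|)) := by
  have hx : 0 < |ξ| := abs_pos.2 hξ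
  set x := |ξ|
  set x₁ := |ξ₁|
  set x₂ := |ξ₂|
  have p1 : 0 < x₁ := by linarith
  have p2 : 0 < x₂ := by linarith
  have i : ∀ y : ℝ, 1 ≤ y → y ^ (-(1 - δ)) ≤ 2 * (1 + y) ^ (-(1 - δ)) := by
    intro y hy
    have a := neg_pow_anti (by linarith : 0 < (1 + y) / 2) (by linarith : (1 + y) / 2 ≤ y)
      (by linarith : 0 ≤ 1 - δ)
    have b : (2:ℝ) ^ (1 - δ) ≤ 2 ^ (1:ℝ) :=
      Real.rpow_le_rpow_of_exponent_le (by norm_num) (by linarith)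
    rw [Real.rpow_one] at b
    rw [Real.div_rpow (by linarith) (by norm_num), Real.rpow_neg (by norm_num : (0:ℝ) ≤ 2),
      div_inv_eq_mul] at a
    have : 0 ≤ (1 + y) ^ (-(1 - δ)) := by positivity
    nlinarith
  have j : x ^ 2 * x ^ (-(1 - δ)) ≤ min 1 x * (1 + x) ^ (1 + δ) := by
    have e : x ^ 2 * x ^ (-(1 - δ)) = x ^ (1 + δ) := by
      rw [← Real.rpow_natCast, ← Real.rpow_add hx]; congr 1; push_cast; ring
    rw [e]
    rcases le_total 1 x with h | h
    · rw [min_eq_left h, one_mul]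
      exact Real.rpow_le_rpow hx.le (by linarith) (by linarith)
    · rw [min_eq_right h, Real.rpow_add hx, Real.rpow_one]
      have a1 : x ^ δ ≤ 1 := Real.rpow_le_one hx.le h hδ.le
      have a2 : 1 ≤ (1 + x) ^ (1 + δ) := Real.one_le_rpow (by linarith) (by linarith)
      gcongr
      linarith
  set X := 1 + x
  set X₁ := 1 + x₁
  set X₂ := 1 + x₂
  have P : 0 < X := by positivity
  have P1 : 0 < X₁ := by positivity
  have P2 : 0 < X₂ := by positivity
  set Y := 2 + x₁ + x₂
  have hY : Y = X₁ + X₂ := by simp only [Y, X₁, X₂]; ring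
  have hXY : X ≤ Y := by simp only [Y, X]; linarith
  have hY0 : 0 < Y := by linarith
  have hprod : X₁ * X₂ ≤ Y ^ 2 := by rw [hY]; nlinarith
  have k1 : (X₁ * X₂) ^ (1 / 2 - 2 * δ) ≤ Y ^ (1 - 4 * δ) := by
    calc (X₁ * X₂) ^ (1 / 2 - 2 * δ) ≤ (Y ^ 2) ^ (1 / 2 - 2 * δ) :=
          Real.rpow_le_rpow (by positivity) hprod (by linarith)
      _ = Y ^ (1 - 4 * δ) := by
          rw [← Real.rpow_natCast, ← Real.rpow_mul hY0.le]; congr 1; push_cast; ring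
  have k2 : X ^ (4 * δ) ≤ Y ^ (4 * δ) := Real.rpow_le_rpow P.le hXY (by linarith)
  have k3 : Y ^ (1 - 4 * δ) * Y ^ (4 * δ) = Y := by
    rw [← Real.rpow_add hY0]; simp
  have e1 : ((X₁ * X₂) / X) ^ (3 / 2 - 3 * δ) =
      (X₁ * X₂) ^ (3 / 2 - 3 * δ) * X ^ (-(3 / 2 - 3 * δ)) := by
    rw [Real.div_rpow (by positivity) P.le, Real.rpow_neg P.le, div_eq_mul_inv]
  have e2 : (c * (x * x₁ * x₂)) ^ (-(1 - δ)) =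
      c ^ (-(1 - δ)) * (x ^ (-(1 - δ)) * x₁ ^ (-(1 - δ)) * x₂ ^ (-(1 - δ))) := by
    rw [Real.mul_rpow hc.le (by positivity), Real.mul_rpow (by positivity) p2.le,
      Real.mul_rpow hx.le p1.le]
  have e3 : X₁ ^ (-(1 - δ)) * X₂ ^ (-(1 - δ)) = (X₁ * X₂) ^ (-(1 - δ)) :=
    (Real.mul_rpow P1.le P2.le).symm
  have e4 : (X₁ * X₂) ^ (3 / 2 - 3 * δ) * (X₁ * X₂) ^ (-(1 - δ)) = (X₁ * X₂) ^ (1 / 2 - 2 * δ) := by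
    rw [← Real.rpow_add (by positivity)]; congr 1; ring
  have e5 : X ^ (1 + δ) * X ^ (-(3 / 2 - 3 * δ)) = X ^ (4 * δ) * (Real.sqrt X)⁻¹ := by
    rw [Real.sqrt_eq_rpow, ← Real.rpow_neg P.le, ← Real.rpow_add P, ← Real.rpow_add P]
    congr 1; ring
  rw [e1, e2]
  have i1 := i x₁ h₁
  have i2 := i x₂ h₂
  have m0 : 0 ≤ min 1 x := le_min zero_le_one hx.le
  calc x ^ 2 * ((X₁ * X₂) ^ (3 / 2 - 3 * δ) * X ^ (-(3 / 2 - 3 * δ))) *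
        (c ^ (-(1 - δ)) * (x ^ (-(1 - δ)) * x₁ ^ (-(1 - δ)) * x₂ ^ (-(1 - δ))))
      = c ^ (-(1 - δ)) * ((x ^ 2 * x ^ (-(1 - δ))) * X ^ (-(3 / 2 - 3 * δ)) *
          ((X₁ * X₂) ^ (3 / 2 - 3 * δ) * (x₁ ^ (-(1 - δ)) * x₂ ^ (-(1 - δ))))) := by ring
    _ ≤ c ^ (-(1 - δ)) * ((min 1 x * X ^ (1 + δ)) * X ^ (-(3 / 2 - 3 * δ)) *
          ((X₁ * X₂) ^ (3 / 2 - 3 * δ) * ((2 * X₁ ^ (-(1 - δ))) * (2 * X₂ ^ (-(1 - δ)))))) := by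
        gcongr
    _ = c ^ (-(1 - δ)) * 4 * (min 1 x * (X ^ (1 + δ) * X ^ (-(3 / 2 - 3 * δ))) *
          ((X₁ * X₂) ^ (3 / 2 - 3 * δ) * (X₁ ^ (-(1 - δ)) * X₂ ^ (-(1 - δ))))) := by ring
    _ = c ^ (-(1 - δ)) * 4 * (min 1 x * (X ^ (4 * δ) * (Real.sqrt X)⁻¹) *
          (X₁ * X₂) ^ (1 / 2 - 2 * δ)) := by rw [e5, e3, e4]
    _ ≤ c ^ (-(1 - δ)) * 4 * (min 1 x * (Y ^ (4 * δ) * (Real.sqrt X)⁻¹) * Y ^ (1 - 4 * δ)) := by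
        gcongr
    _ = c ^ (-(1 - δ)) * 4 * (min 1 x * (Y ^ (1 - 4 * δ) * Y ^ (4 * δ)) / Real.sqrt X) := by
        rw [div_eq_mul_inv]; ring
    _ = _ := by rw [k3]

/-- The resonance function lower bound. -/
lemma resonance {a₁ a₂ : ℝ} (ha₁ : a₁ ≠ 0) (ha₂ : a₂ ≠ 0)
    (hratio : a₂ / a₁ < 0 ∨ a₂ / a₁ = 1 ∨ 4 < a₂ / a₁) :
    ∃ c : ℝ, 0 < c ∧ ∀ ξ ξ₁ : ℝ, c * (|ξ| * |ξ₁| * |ξ - ξ₁|) ≤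
      |a₂ * ξ ^ 3 - a₁ * ξ₁ ^ 3 - a₂ * (ξ - ξ₁) ^ 3| := by
  have fac : ∀ ξ ξ₁ : ℝ, a₂ * ξ ^ 3 - a₁ * ξ₁ ^ 3 - a₂ * (ξ - ξ₁) ^ 3 =
      ξ₁ * (3 * a₂ * ξ ^ 2 - 3 * a₂ * ξ * ξ₁ + (a₂ - a₁) * ξ₁ ^ 2) := fun ξ ξ₁ => by ring
  by_cases h1 : a₂ / a₁ = 1
  · have : a₂ = a₁ := by field_simp at h1; exact h1
    subst this
    refine ⟨3 * |a₂|, by positivity, fun ξ ξ₁ => ?_⟩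
    have : a₂ * ξ ^ 3 - a₂ * ξ₁ ^ 3 - a₂ * (ξ - ξ₁) ^ 3 = 3 * a₂ * (ξ * ξ₁ * (ξ - ξ₁)) := by ring
    rw [this, abs_mul, abs_mul, abs_mul, abs_mul]
    simp
  · have hd : 3 * a₂ * (4 * a₁ - a₂) < 0 := by
      have : 3 * a₂ * (4 * a₁ - a₂) = 3 * a₁ ^ 2 * ((a₂ / a₁) * (4 - a₂ / a₁)) := by field_simp
      rw [this]
      have : (a₂ / a₁) * (4 - a₂ / a₁) < 0 := by
        rcases hratio with h | h | h
        · nlinarith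
        · exact absurd h h1
        · nlinarith
      have : 0 < 3 * a₁ ^ 2 := by positivity
      nlinarith
    set D := -(3 * a₂ * (4 * a₁ - a₂)) with hD
    have hD0 : 0 < D := by linarith
    -- quadratic form `q = A ξ² + B ξ ξ₁ + E ξ₁²`, `4 A E - B² = D`
    set M := 12 * |a₂| + 4 * |a₂ - a₁| + 1 with hM
    have hM0 : 0 < M := by positivity
    refine ⟨D / (2 * M), by positivity, fun ξ ξ₁ => ?_⟩
    rw [fac, abs_mul]
    set q := 3 * a₂ * ξ ^ 2 - 3 * a₂ * ξ * ξ₁ + (a₂ - a₁) * ξ₁ ^ 2 with hq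
    have k1 : 12 * a₂ * q = (6 * a₂ * ξ - 3 * a₂ * ξ₁) ^ 2 + D * ξ₁ ^ 2 := by
      rw [hq, hD]; ring
    have k2 : 4 * (a₂ - a₁) * q = (2 * (a₂ - a₁) * ξ₁ - 3 * a₂ * ξ) ^ 2 + D * ξ ^ 2 := by
      rw [hq, hD]; ring
    have k3 : D * ξ₁ ^ 2 ≤ 12 * |a₂| * |q| := by
      have : 12 * a₂ * q ≤ 12 * |a₂| * |q| := by
        have := le_abs_self (12 * a₂ * q)
        rwa [abs_mul, abs_mul, abs_of_pos (by norm_num : (0:ℝ) < 12)] at this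
      nlinarith [sq_nonneg (6 * a₂ * ξ - 3 * a₂ * ξ₁)]
    have k4 : D * ξ ^ 2 ≤ 4 * |a₂ - a₁| * |q| := by
      have : 4 * (a₂ - a₁) * q ≤ 4 * |a₂ - a₁| * |q| := by
        have := le_abs_self (4 * (a₂ - a₁) * q)
        rwa [abs_mul, abs_mul, abs_of_pos (by norm_num : (0:ℝ) < 4)] at this
      nlinarith [sq_nonneg (2 * (a₂ - a₁) * ξ₁ - 3 * a₂ * ξ)]
    have k5 : D * (ξ ^ 2 + ξ₁ ^ 2) ≤ M * |q| := by
      rw [hM]; nlinarith [abs_nonneg q]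
    have k6 : |ξ| * |ξ - ξ₁| ≤ 2 * (ξ ^ 2 + ξ₁ ^ 2) := by
      have a : |ξ - ξ₁| ≤ |ξ| + |ξ₁| := abs_sub _ _
      rw [← sq_abs ξ, ← sq_abs ξ₁]
      nlinarith [abs_nonneg ξ, abs_nonneg ξ₁, sq_nonneg (|ξ| - |ξ₁|)]
    have k7 : D / (2 * M) * (|ξ| * |ξ - ξ₁|) ≤ |q| := by
      rw [div_mul_eq_mul_div, div_le_iff₀ (by positivity)]
      nlinarith
    calc D / (2 * M) * (|ξ| * |ξ₁| * |ξ - ξ₁|) = |ξ₁| * (D / (2 * M) * (|ξ| * |ξ - ξ₁|)) := by ring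
      _ ≤ _ := by gcongr

/-- High frequency weight. -/
noncomputable def WH (ξ ξ₁ : ℝ) : ℝ :=
  if 1 ≤ |ξ₁| ∧ 1 ≤ |ξ - ξ₁| then min 1 |ξ| * (2 + |ξ₁| + |ξ - ξ₁|) / Real.sqrt (1 + |ξ|) else 0

/-- Low frequency weight. -/
noncomputable def WL (ξ ξ₁ : ℝ) : ℝ :=
  if 1 ≤ |ξ₁| ∧ 1 ≤ |ξ - ξ₁| then 0 else ξ ^ 2

lemma WH_nonneg (ξ ξ₁ : ℝ) : 0 ≤ WH ξ ξ₁ := by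
  unfold WH; split_ifs <;> positivity

lemma WL_nonneg (ξ ξ₁ : ℝ) : 0 ≤ WL ξ ξ₁ := by
  unfold WL; split_ifs <;> positivity

lemma measurableSet_high : MeasurableSet {p : ℝ × ℝ | 1 ≤ |p.2| ∧ 1 ≤ |p.1 - p.2|} := by
  have h1 : Measurable fun p : ℝ × ℝ => |p.2| := continuous_snd.abs.measurable
  have h2 : Measurable fun p : ℝ × ℝ => |p.1 - p.2| :=
    (continuous_fst.sub continuous_snd).abs.measurable
  exact (measurableSet_le measurable_const h1).inter (measurableSet_le measurable_const h2)

lemma WH_meas : Measurable (fun p : ℝ × ℝ => WH p.1 p.2) := by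
  unfold WH
  refine Measurable.ite measurableSet_high ?_ measurable_const
  refine Continuous.measurable ?_
  refine Continuous.div (by fun_prop) (by fun_prop) ?_
  intro p
  have : 0 < Real.sqrt (1 + |p.1|) := Real.sqrt_pos.2 (by positivity)
  exact this.ne'

lemma WL_meas : Measurable (fun p : ℝ × ℝ => WL p.1 p.2) := by
  unfold WL
  exact Measurable.ite measurableSet_high measurable_const (by fun_prop)

lemma WH_symm (ξ ξ₁ : ℝ) : WH ξ (ξ - ξ₁) = WH ξ ξ₁ := by
  unfold WH
  have : ξ - (ξ - ξ₁) = ξ₁ := by ring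
  rw [this]
  have e : 2 + |ξ - ξ₁| + |ξ₁| = 2 + |ξ₁| + |ξ - ξ₁| := by ring
  rw [e]
  split_ifs with h1 h2 h2
  · rfl
  · exact absurd h1.symm h2
  · exact absurd h2.symm h1
  · rfl

/-- pointwise kernel bound -/
lemma pointwise {a₁ a₂ s δ : ℝ} (ha₁ : a₁ ≠ 0) (ha₂ : a₂ ≠ 0)
    (hratio : a₂ / a₁ < 0 ∨ a₂ / a₁ = 1 ∨ 4 < a₂ / a₁) (hδ : 0 < δ) (hδ' : δ ≤ 1 / 20)
    (hs : -(3 / 4) + 3 / 2 * δ ≤ s) :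
    ∃ C : ℝ, 0 < C ∧ ∀ b' : ℝ, b' - 1 ≤ -((1 - δ) / 2) → ∀ τ ξ τ₁ ξ₁ : ℝ,
      (|ξ| * ((1 + |ξ|) ^ s * (1 + |ξ₁|) ^ (-s) * (1 + |ξ - ξ₁|) ^ (-s)) *
        ((1 + |τ - a₂ * ξ ^ 3|) ^ (b' - 1) * (1 + |τ₁ - a₁ * ξ₁ ^ 3|) ^ (-(1 / 2 + δ / 4)) *
          (1 + |τ - τ₁ - a₂ * (ξ - ξ₁) ^ 3|) ^ (-(1 / 2 + δ / 4)))) ^ 2 ≤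
      (C * (WH ξ ξ₁ + WL ξ ξ₁)) * ((1 + |τ₁ - a₁ * ξ₁ ^ 3|) ^ (-(1 + δ / 2)) *
          (1 + |τ - τ₁ - a₂ * (ξ - ξ₁) ^ 3|) ^ (-(1 + δ / 2)))
      + (C * WH ξ ξ₁) * ((1 + |τ - a₂ * ξ ^ 3|) ^ (-(1 + δ / 2)) *
          (1 + |τ - τ₁ - a₂ * (ξ - ξ₁) ^ 3|) ^ (-(1 + δ / 2)))
      + (C * WH ξ ξ₁) * ((1 + |τ - a₂ * ξ ^ 3|) ^ (-(1 + δ / 2)) *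
          (1 + |τ₁ - a₁ * ξ₁ ^ 3|) ^ (-(1 + δ / 2))) := by
  obtain ⟨c, hc, hres⟩ := resonance ha₁ ha₂ hratio
  set C := (c / 3) ^ (-(1 - δ)) * 4 + 16 with hC
  have hC0 : 0 < C := by positivity
  refine ⟨C, hC0, fun b' hb' τ ξ τ₁ ξ₁ => ?_⟩
  have hres := hres ξ ξ₁
  have hH : |a₂ * ξ ^ 3 - a₁ * ξ₁ ^ 3 - a₂ * (ξ - ξ₁) ^ 3| ≤
      |τ - a₂ * ξ ^ 3| + |τ₁ - a₁ * ξ₁ ^ 3| + |τ - τ₁ - a₂ * (ξ - ξ₁) ^ 3| := by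
    have e : a₂ * ξ ^ 3 - a₁ * ξ₁ ^ 3 - a₂ * (ξ - ξ₁) ^ 3 =
      -(τ - a₂ * ξ ^ 3) + (τ₁ - a₁ * ξ₁ ^ 3) + (τ - τ₁ - a₂ * (ξ - ξ₁) ^ 3) := by ring
    rw [e]
    refine (abs_add_three _ _ _).trans ?_
    rw [abs_neg]
  have hL : 1 ≤ 1 + |τ - a₂ * ξ ^ 3| := by linarith [abs_nonneg (τ - a₂ * ξ ^ 3)]
  have hL1 : 1 ≤ 1 + |τ₁ - a₁ * ξ₁ ^ 3| := by linarith [abs_nonneg (τ₁ - a₁ * ξ₁ ^ 3)]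
  have hL2 : 1 ≤ 1 + |τ - τ₁ - a₂ * (ξ - ξ₁) ^ 3| := by
    linarith [abs_nonneg (τ - τ₁ - a₂ * (ξ - ξ₁) ^ 3)]
  have hHL : c * (|ξ| * |ξ₁| * |ξ - ξ₁|) ≤ (1 + |τ - a₂ * ξ ^ 3|) + (1 + |τ₁ - a₁ * ξ₁ ^ 3|)
      + (1 + |τ - τ₁ - a₂ * (ξ - ξ₁) ^ 3|) := by linarith
  clear hH hres
  set L := 1 + |τ - a₂ * ξ ^ 3|
  set L₁ := 1 + |τ₁ - a₁ * ξ₁ ^ 3|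
  set L₂ := 1 + |τ - τ₁ - a₂ * (ξ - ξ₁) ^ 3|
  have hX : 1 ≤ 1 + |ξ| := by linarith [abs_nonneg ξ]
  have hX1 : 1 ≤ 1 + |ξ₁| := by linarith [abs_nonneg ξ₁]
  have hX2 : 1 ≤ 1 + |ξ - ξ₁| := by linarith [abs_nonneg (ξ - ξ₁)]
  have htri : |ξ| ≤ |ξ₁| + |ξ - ξ₁| := by
    calc |ξ| = |ξ₁ + (ξ - ξ₁)| := by ring_nf
      _ ≤ _ := abs_add_le _ _
  set Q := ((1 + |ξ₁|) * (1 + |ξ - ξ₁|)) / (1 + |ξ|) with hQ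
  have hQ1 : 1 ≤ Q := by
    rw [hQ, le_div_iff₀ (by linarith)]
    nlinarith [abs_nonneg ξ₁, abs_nonneg (ξ - ξ₁)]
  have hQ0 : 0 < Q := by linarith
  -- first reduction
  have hwt : (1 + |ξ|) ^ s * (1 + |ξ₁|) ^ (-s) * (1 + |ξ - ξ₁|) ^ (-s) = Q ^ (-s) := by
    rw [hQ, Real.div_rpow (by positivity) (by positivity), Real.mul_rpow (by positivity) (by positivity),
      Real.rpow_neg (by positivity : 0 ≤ 1 + |ξ|), div_inv_eq_mul]
    ring
  have sq2 : ∀ x r : ℝ, 0 ≤ x → (x ^ r) ^ 2 = x ^ (2 * r) := by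
    intro x r hx
    rw [← Real.rpow_natCast, ← Real.rpow_mul hx]; congr 1; push_cast; ring
  have hmain : (|ξ| * ((1 + |ξ|) ^ s * (1 + |ξ₁|) ^ (-s) * (1 + |ξ - ξ₁|) ^ (-s)) *
        (L ^ (b' - 1) * L₁ ^ (-(1 / 2 + δ / 4)) * L₂ ^ (-(1 / 2 + δ / 4)))) ^ 2
      ≤ |ξ| ^ 2 * Q ^ (3 / 2 - 3 * δ) *
        (L ^ (-(1 - δ)) * L₁ ^ (-(1 + δ / 2)) * L₂ ^ (-(1 + δ / 2))) := by
    rw [hwt]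
    simp only [mul_pow]
    rw [sq2 Q _ hQ0.le, sq2 L _ (by linarith), sq2 L₁ _ (by linarith), sq2 L₂ _ (by linarith)]
    have e : 2 * (-(1 / 2 + δ / 4)) = -(1 + δ / 2) := by ring
    rw [e]
    have g1 : Q ^ (2 * -s) ≤ Q ^ (3 / 2 - 3 * δ) :=
      Real.rpow_le_rpow_of_exponent_le hQ1 (by linarith)
    have g2 : L ^ (2 * (b' - 1)) ≤ L ^ (-(1 - δ)) :=
      Real.rpow_le_rpow_of_exponent_le hL (by linarith)
    gcongr
  refine hmain.trans ?_
  have q0 : 0 ≤ L ^ (-(1 + δ / 2)) := by positivity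
  have q1 : 0 ≤ L₁ ^ (-(1 + δ / 2)) := by positivity
  have q2 : 0 ≤ L₂ ^ (-(1 + δ / 2)) := by positivity
  by_cases hhigh : 1 ≤ |ξ₁| ∧ 1 ≤ |ξ - ξ₁|
  · have eL : WL ξ ξ₁ = 0 := by simp [WL, hhigh]
    rw [eL, add_zero]
    by_cases hξ : ξ = 0
    · have : WH ξ ξ₁ = 0 := by simp [WH, hξ]
      rw [this, hξ]; simp
    have hk : 0 < c / 3 * (|ξ| * |ξ₁| * |ξ - ξ₁|) := by
      have : 0 < |ξ| := abs_pos.2 hξ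
      have : 0 < |ξ₁| := by linarith [hhigh.1]
      have : 0 < |ξ - ξ₁| := by linarith [hhigh.2]
      positivity
    have hmod := modulation_trade (θ := 1 - δ) (β := 1 + δ / 2) (by linarith) (by linarith) hk
      hL hL1 hL2 (by
        by_contra! h
        linarith [h.1, h.2.1, h.2.2])
    have hfr := freq_high hδ hδ' (by positivity : 0 < c / 3) hξ htri hhigh.1 hhigh.2
    have eH : min 1 |ξ| * (2 + |ξ₁| + |ξ - ξ₁|) / Real.sqrt (1 + |ξ|) = WH ξ ξ₁ := by
      simp [WH, hhigh]
    rw [eH] at hfr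
    set S := L₁ ^ (-(1 + δ / 2)) * L₂ ^ (-(1 + δ / 2)) + L ^ (-(1 + δ / 2)) * L₂ ^ (-(1 + δ / 2))
      + L ^ (-(1 + δ / 2)) * L₁ ^ (-(1 + δ / 2)) with hS
    have hS0 : 0 ≤ S := by positivity
    have hWH := WH_nonneg ξ ξ₁
    calc _ ≤ |ξ| ^ 2 * Q ^ (3 / 2 - 3 * δ) * ((c / 3 * (|ξ| * |ξ₁| * |ξ - ξ₁|)) ^ (-(1 - δ)) * S) := by
          gcongr
      _ = (|ξ| ^ 2 * Q ^ (3 / 2 - 3 * δ) * (c / 3 * (|ξ| * |ξ₁| * |ξ - ξ₁|)) ^ (-(1 - δ))) * S := by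
          ring
      _ ≤ ((c / 3) ^ (-(1 - δ)) * 4 * WH ξ ξ₁) * S := by gcongr
      _ ≤ (C * WH ξ ξ₁) * S := by
          gcongr
          rw [hC]; linarith
      _ = _ := by rw [hS]; ring
  · have eL : WL ξ ξ₁ = |ξ| ^ 2 := by simp [WL, hhigh]
    have eH : WH ξ ξ₁ = 0 := by simp [WH, hhigh]
    rw [eL, eH]
    simp only [zero_add, mul_zero, zero_mul, add_zero]
    have hQ4 : Q ≤ 4 := by
      rw [hQ, div_le_iff₀ (by linarith)]
      have t1 : |ξ₁| ≤ |ξ| + |ξ - ξ₁| := by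
        calc |ξ₁| = |ξ - (ξ - ξ₁)| := by ring_nf
          _ ≤ _ := abs_sub _ _
      have t2 : |ξ - ξ₁| ≤ |ξ| + |ξ₁| := abs_sub _ _
      rcases not_and_or.1 hhigh with h | h <;> push Not at h
      · nlinarith [abs_nonneg ξ₁, abs_nonneg (ξ - ξ₁), abs_nonneg ξ]
      · nlinarith [abs_nonneg ξ₁, abs_nonneg (ξ - ξ₁), abs_nonneg ξ]
    have g1 : Q ^ (3 / 2 - 3 * δ) ≤ 16 := by
      calc Q ^ (3 / 2 - 3 * δ) ≤ 4 ^ (3 / 2 - 3 * δ) :=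
            Real.rpow_le_rpow hQ0.le hQ4 (by linarith)
        _ ≤ (4:ℝ) ^ (2:ℝ) := Real.rpow_le_rpow_of_exponent_le (by norm_num) (by linarith)
        _ = 16 := by norm_num
    have g2 : L ^ (-(1 - δ)) ≤ 1 := Real.rpow_le_one_of_one_le_of_nonpos hL (by linarith)
    calc _ ≤ |ξ| ^ 2 * 16 * (1 * L₁ ^ (-(1 + δ / 2)) * L₂ ^ (-(1 + δ / 2))) := by gcongr
      _ = (16 * |ξ| ^ 2) * (L₁ ^ (-(1 + δ / 2)) * L₂ ^ (-(1 + δ / 2))) := by ring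
      _ ≤ _ := by
          have h0 : 0 < (c / 3) ^ (-(1 - δ)) := by positivity
          have h16 : 16 ≤ C := by rw [hC]; linarith
          refine mul_le_mul_of_nonneg_right ?_ (mul_nonneg q1 q2)
          exact mul_le_mul_of_nonneg_right h16 (sq_nonneg _)

lemma Good.mono {C₀ C₁ α γ c₁ c₂ x y w : ℝ} (h : Good C₀ α γ c₁ c₂ x y w) (hC : C₀ ≤ C₁) :
    Good C₁ α γ c₁ c₂ x y w := by
  have hS : 0 < Real.sqrt (1 + |x|) := Real.sqrt_pos.2 (by positivity)
  have hd : C₀ / Real.sqrt (1 + |x|) ≤ C₁ / Real.sqrt (1 + |x|) :=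
    div_le_div_of_nonneg_right hC hS.le
  rcases h with h | ⟨h, h' | h'⟩
  · exact Or.inl (h.trans (mul_le_mul_of_nonneg_right hC (abs_nonneg _)))
  · exact Or.inr ⟨h.trans (mul_le_mul_of_nonneg_right hC hS.le), Or.inl (h'.trans hd)⟩
  · exact Or.inr ⟨h.trans (mul_le_mul_of_nonneg_right hC hS.le), Or.inr (h'.trans hd)⟩

lemma Good.scale {C₀ α γ c₁ c₂ x y w K : ℝ} (h : Good C₀ α γ c₁ c₂ x y w) (hC : 0 ≤ C₀)
    (hK : 0 ≤ K) : Good ((K + 1) * C₀) α γ c₁ c₂ x y (K * w) := by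
  have hS : 0 < Real.sqrt (1 + |x|) := Real.sqrt_pos.2 (by positivity)
  have hd : C₀ / Real.sqrt (1 + |x|) ≤ (K + 1) * C₀ / Real.sqrt (1 + |x|) :=
    div_le_div_of_nonneg_right (by nlinarith) hS.le
  have aux : ∀ z : ℝ, 0 ≤ z → w ≤ C₀ * z → K * w ≤ (K + 1) * C₀ * z := by
    intro z hz h
    have : 0 ≤ C₀ * z := by positivity
    nlinarith
  rcases h with h | ⟨h, h' | h'⟩
  · exact Or.inl (aux _ (abs_nonneg _) h)
  · exact Or.inr ⟨aux _ hS.le h, Or.inl (h'.trans hd)⟩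
  · exact Or.inr ⟨aux _ hS.le h, Or.inr (h'.trans hd)⟩

lemma sqrt_facts (x : ℝ) : 1 ≤ Real.sqrt (1 + |x|) ∧ Real.sqrt (1 + |x|) ^ 2 = 1 + |x| := by
  refine ⟨Real.one_le_sqrt.2 (by linarith [abs_nonneg x]), Real.sq_sqrt (by positivity)⟩

lemma good_bdd {R α γ c₁ c₂ x y w : ℝ} (hx : |x| ≤ R) (hy : |y| ≤ R) (hw : w ≤ R) :
    Good (R + R * (1 + |c₁|) * (1 + R)) α γ c₁ c₂ x y w := by
  obtain ⟨h1, h2⟩ := sqrt_facts x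
  have hS : Real.sqrt (1 + |x|) ≤ 1 + R := by nlinarith
  unfold Good
  set S := Real.sqrt (1 + |x|)
  have hR : 0 ≤ R := (abs_nonneg x).trans hx
  have hc : 0 ≤ R * (1 + |c₁|) * (1 + R) := by positivity
  refine Or.inr ⟨by nlinarith, Or.inl ?_⟩
  rw [le_div_iff₀ (by linarith)]
  have : |y - c₁ * x| ≤ R * (1 + |c₁|) := by
    calc |y - c₁ * x| ≤ |y| + |c₁ * x| := abs_sub _ _
      _ = |y| + |c₁| * |x| := by rw [abs_mul]
      _ ≤ R + |c₁| * R := by gcongr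
      _ = _ := by ring
  calc _ ≤ R * (1 + |c₁|) * (1 + R) := by gcongr
    _ ≤ _ := by linarith

/-- Low frequency weight is good. -/
lemma good_low {α γ : ℝ} (hα : α ≠ 0) (hγ : γ ≠ 0) (c₁ c₂ : ℝ) :
    ∃ C₀ : ℝ, 0 ≤ C₀ ∧ ∀ x y, Good C₀ α γ c₁ c₂ x y (WL x y) := by
  have pα : 0 < |α| := abs_pos.2 hα
  have pγ : 0 < |γ| := abs_pos.2 hγ
  set B := 4 + 4 * |α| / |γ| + 4 * |γ| / |α| with hB
  have hB4 : 4 ≤ B := by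
    have : 0 ≤ 4 * |α| / |γ| := by positivity
    have : 0 ≤ 4 * |γ| / |α| := by positivity
    linarith
  have hB1 : 4 * (|α| + |γ|) ≤ B * |γ| := by
    have : (4 * |α| / |γ|) * |γ| = 4 * |α| := by field_simp
    have : 0 ≤ 4 * |γ| / |α| * |γ| := by positivity
    rw [hB]; linarith
  have hB2 : 4 * (|α| + |γ|) ≤ B * |α| := by
    have : (4 * |γ| / |α|) * |α| = 4 * |γ| := by field_simp
    have : 0 ≤ 4 * |α| / |γ| * |α| := by positivity
    rw [hB]; linarith
  set C₁ := 4 / |γ| + 4 / |α| with hC₁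
  have hC1 : 0 ≤ C₁ := by positivity
  set R := B + 1 with hR
  set C₂ := R + R * (1 + |c₁|) * (1 + R) with hC₂
  have hR0 : 0 ≤ R := by linarith
  have hC2 : 0 ≤ C₂ := by positivity
  refine ⟨C₁ + C₂, by positivity, fun x y => ?_⟩
  by_cases hh : 1 ≤ |y| ∧ 1 ≤ |x - y|
  · have : WL x y = 0 := by simp [WL, hh]
    rw [this]
    exact Or.inl (by positivity)
  have : WL x y = x ^ 2 := by simp [WL, hh]
  rw [this]
  have hT1 : |α| * y ^ 2 - |γ| * (y - x) ^ 2 ≤ |α * y ^ 2 - γ * (y - x) ^ 2| := by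
    have := abs_sub_abs_le_abs_sub (α * y ^ 2) (γ * (y - x) ^ 2)
    rwa [abs_mul, abs_mul, abs_of_nonneg (sq_nonneg y), abs_of_nonneg (sq_nonneg (y - x))] at this
  have hT2 : |γ| * (y - x) ^ 2 - |α| * y ^ 2 ≤ |α * y ^ 2 - γ * (y - x) ^ 2| := by
    have := abs_sub_abs_le_abs_sub (γ * (y - x) ^ 2) (α * y ^ 2)
    rw [abs_sub_comm] at this
    rwa [abs_mul, abs_mul, abs_of_nonneg (sq_nonneg y), abs_of_nonneg (sq_nonneg (y - x))] at this
  by_cases hxB : x ^ 2 ≤ B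
  · refine Good.mono (C₀ := C₂) ?_ (by linarith)
    have hxR : |x| ≤ B := by
      rw [← sq_abs] at hxB
      nlinarith [abs_nonneg x]
    refine good_bdd (by linarith) ?_ (by linarith)
    rcases not_and_or.1 hh with h | h <;> push Not at h
    · linarith
    · have : |y| ≤ |x| + |x - y| := by
        calc |y| = |x - (x - y)| := by ring_nf
          _ ≤ _ := abs_sub _ _
      linarith
  · push Not at hxB
    left
    set Z := |α * y ^ 2 - γ * (y - x) ^ 2|
    have hZ0 : 0 ≤ Z := abs_nonneg _
    have fin : ∀ m : ℝ, 0 < m → 4 / m ≤ C₁ → m * x ^ 2 ≤ 4 * Z → x ^ 2 ≤ (C₁ + C₂) * Z := by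
      intro m hm h4 h
      have : x ^ 2 ≤ 4 / m * Z := by
        rw [div_mul_eq_mul_div, le_div_iff₀ hm]; linarith
      nlinarith
    have g1 : 4 / |γ| ≤ C₁ := by
      have : 0 ≤ 4 / |α| := by positivity
      linarith
    have g2 : 4 / |α| ≤ C₁ := by
      have : 0 ≤ 4 / |γ| := by positivity
      linarith
    rcases not_and_or.1 hh with h | h <;> push Not at h
    · have hy : y ^ 2 ≤ 1 := by rw [← sq_abs]; nlinarith [abs_nonneg y]
      refine fin |γ| pγ g1 ?_
      have hyx : x ^ 2 / 2 - 1 ≤ (y - x) ^ 2 := by nlinarith [sq_nonneg (2 * y - x)]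
      nlinarith [mul_le_mul_of_nonneg_left hyx pγ.le, mul_le_mul_of_nonneg_left hy pα.le,
        mul_le_mul_of_nonneg_left hxB.le pγ.le]
    · have hy : (y - x) ^ 2 ≤ 1 := by
        rw [← sq_abs, abs_sub_comm]; nlinarith [abs_nonneg (x - y)]
      refine fin |α| pα g2 ?_
      have hyx : x ^ 2 / 2 - 1 ≤ y ^ 2 := by nlinarith [sq_nonneg (2 * y - x)]
      nlinarith [mul_le_mul_of_nonneg_left hyx pα.le, mul_le_mul_of_nonneg_left hy pγ.le,
        mul_le_mul_of_nonneg_left hxB.le pα.le]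

/-- Degenerate case `α = γ`. -/
lemma good_eq {α K : ℝ} (hα : α ≠ 0) (hK : 0 ≤ K) :
    ∃ C₀ : ℝ, 0 ≤ C₀ ∧ ∀ x y w, w ≤ K * (1 + |x| + |y|) → w ≤ K * |x| * (1 + |x| + |y|) →
      (|2 * y - x| ≤ 1 → w ≤ K * Real.sqrt (1 + |x|)) → Good C₀ α α (1 / 2) (1 / 2) x y w := by
  have pα : 0 < |α| := abs_pos.2 hα
  refine ⟨3 * K / |α| + K + 1, by positivity, fun x y w h1 h2 h3 => ?_⟩
  have hφ : |α * y ^ 2 - α * (y - x) ^ 2| = |α| * (|x| * |2 * y - x|) := by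
    rw [← abs_mul, ← abs_mul]; congr 1; ring
  obtain ⟨s1, s2⟩ := sqrt_facts x
  unfold Good
  rw [hφ]
  set S := Real.sqrt (1 + |x|)
  have hy : |y| ≤ (|x| + |2 * y - x|) / 2 := by
    have : |2 * y| ≤ |2 * y - x| + |x| := by
      calc |2 * y| = |(2 * y - x) + x| := by ring_nf
        _ ≤ _ := abs_add_le _ _
    rw [abs_mul, abs_of_pos (by norm_num : (0:ℝ) < 2)] at this
    linarith
  have hhalf : |y - 1 / 2 * x| = |2 * y - x| / 2 := by
    have : y - 1 / 2 * x = (2 * y - x) / 2 := by ring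
    rw [this, abs_div]; norm_num
  rw [hhalf]
  set d := |2 * y - x|
  have hd0 : 0 ≤ d := abs_nonneg _
  have hx0 : 0 ≤ |x| := abs_nonneg _
  have fin : w ≤ 3 * K * (|x| * d) → w ≤ (3 * K / |α| + K + 1) * (|α| * (|x| * d)) := by
    intro h
    have e : 3 * K / |α| * (|α| * (|x| * d)) = 3 * K * (|x| * d) := by field_simp
    have : 0 ≤ (K + 1) * (|α| * (|x| * d)) := by positivity
    linarith
  have hKα : 0 ≤ 3 * K / |α| := by positivity
  by_cases hd : 1 ≤ d
  · left
    apply fin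
    by_cases hx1 : 1 ≤ |x|
    · have : 1 + |x| + |y| ≤ 3 * (|x| * d) := by nlinarith
      nlinarith
    · push Not at hx1
      have : 1 + |x| + |y| ≤ 3 * d := by nlinarith
      have := mul_le_mul_of_nonneg_left this (mul_nonneg hK hx0)
      linarith
  · push Not at hd
    have hw := h3 hd.le
    by_cases he : d * S ≤ 2
    · right
      refine ⟨by nlinarith, Or.inl ?_⟩
      rw [le_div_iff₀ (by linarith)]
      nlinarith
    · left
      push Not at he
      apply fin
      have hS2 : 2 < S := by nlinarith
      have : S ≤ |x| * d := by
        have : S ^ 2 / 2 ≤ |x| := by nlinarith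
        nlinarith
      nlinarith [mul_le_mul_of_nonneg_left this hK]

set_option maxHeartbeats 800000 in
/-- Transversal case, near one of the two lines. -/
lemma good_half {κ c K N : ℝ} (hκ : κ ≠ 0) (hc : c ≠ 0) (hK : 0 ≤ K) (hN : 0 ≤ N) :
    ∃ C₀ : ℝ, 0 ≤ C₀ ∧ ∀ x y v w : ℝ, 0 ≤ w → w ≤ K * (|x| + |y|) → 1 ≤ K * (|x| + |y|) →
      (w * Real.sqrt (1 + |x|) ≤ K * (|x| + |y|) ∨ w * Real.sqrt (1 + |y|) ≤ K * (|x| + |y|)) →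
      |x| + |y| ≤ N * |v| →
      (w ≤ C₀ * |κ * (y - c * x) * v| ∨ (w ≤ C₀ * Real.sqrt (1 + |x|) ∧
        |y - c * x| ≤ C₀ / Real.sqrt (1 + |x|))) := by
  have pκ : 0 < |κ| := abs_pos.2 hκ
  have pc : 0 < |c| := abs_pos.2 hc
  set M := 2 + |c| + |c|⁻¹ with hM
  have hM1 : 1 ≤ M := by
    have : 0 ≤ |c|⁻¹ := by positivity
    rw [hM]; linarith
  set E := N * (K + 1) * (K * M ^ 2) with hE
  have hE0 : 0 ≤ E := by positivity
  refine ⟨1 + K * M ^ 2 + E / |κ|, by positivity, fun x y v w w0 h1 h2 h3 h4 => ?_⟩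
  have hEκ : 0 ≤ E / |κ| := by positivity
  have hKM : 0 ≤ K * M ^ 2 := by positivity
  obtain ⟨s1, s2⟩ := sqrt_facts x
  obtain ⟨r1, r2⟩ := sqrt_facts y
  set S := Real.sqrt (1 + |x|)
  set S' := Real.sqrt (1 + |y|)
  set T := |x| + |y| with hT
  rw [abs_mul, abs_mul]
  have hu1 : |y| ≤ |c| * |x| + |y - c * x| := by
    calc |y| = |c * x + (y - c * x)| := by ring_nf
      _ ≤ |c * x| + |y - c * x| := abs_add_le _ _
      _ = _ := by rw [abs_mul]
  have hu2 : |c| * |x| ≤ |y| + |y - c * x| := by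
    calc |c| * |x| = |y - (y - c * x)| := by rw [← abs_mul]; ring_nf
      _ ≤ _ := abs_sub _ _
  set u := |y - c * x|
  have hu0 : 0 ≤ u := abs_nonneg _
  have hv0 : 0 ≤ |v| := abs_nonneg _
  have hT0 : 0 ≤ T := by positivity
  have hx0 : 0 ≤ |x| := abs_nonneg _
  have hy0 : 0 ≤ |y| := abs_nonneg _
  have fin : w ≤ E * (u * |v|) → w ≤ (1 + K * M ^ 2 + E / |κ|) * (|κ| * u * |v|) := by
    intro h
    have e : E / |κ| * (|κ| * u * |v|) = E * (u * |v|) := by field_simp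
    have : 0 ≤ (1 + K * M ^ 2) * (|κ| * u * |v|) := by positivity
    linarith
  have hM2 : 1 ≤ M ^ 2 := by nlinarith
  by_cases hu : 1 ≤ u
  · left
    apply fin
    calc w ≤ K * T := h1
      _ ≤ K * (N * |v|) := by gcongr
      _ = N * 1 * (K * 1) * (1 * |v|) := by ring
      _ ≤ N * (K + 1) * (K * M ^ 2) * (u * |v|) := by gcongr; linarith
  · push Not at hu
    have t1 : T ≤ M * (1 + |x|) := by
      have : 0 ≤ |c|⁻¹ * (1 + |x|) := by positivity
      rw [hM, hT]; nlinarith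
    have t2 : 1 + |x| ≤ M * (1 + |y|) := by
      have : |x| ≤ |c|⁻¹ * (|y| + 1) := by
        rw [inv_mul_eq_div, le_div_iff₀ pc]; linarith
      have : 0 ≤ |c| * (1 + |y|) := by positivity
      rw [hM]; nlinarith
    have hw : w ≤ K * M ^ 2 * S := by
      rcases h3 with h3 | h3
      · have : w * S ≤ (K * M ^ 2 * S) * S := by
          calc w * S ≤ K * T := h3
            _ ≤ K * (M * (1 + |x|)) := by gcongr
            _ = K * M * 1 * S ^ 2 := by rw [s2]; ring
            _ ≤ K * M * M * S ^ 2 := by gcongr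
            _ = _ := by ring
        exact le_of_mul_le_mul_right this (by linarith)
      · have hSS : S ≤ M * S' := by
          have : S ^ 2 ≤ (M * S') ^ 2 := by
            rw [mul_pow, s2, r2]
            nlinarith
          exact (le_abs_self _).trans (abs_le_of_sq_le_sq this (by positivity))
        have : w * S ≤ (K * M ^ 2 * S) * S := by
          calc w * S ≤ w * (M * S') := by gcongr
            _ = M * (w * S') := by ring
            _ ≤ M * (K * T) := by gcongr
            _ ≤ M * (K * (M * (1 + |x|))) := by gcongr
            _ = _ := by rw [← s2]; ring
        exact le_of_mul_le_mul_right this (by linarith)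
    by_cases he : u * S ≤ 1
    · right
      have hS0 : 0 < S := by linarith
      refine ⟨hw.trans (mul_le_mul_of_nonneg_right (by linarith) hS0.le), ?_⟩
      rw [le_div_iff₀ hS0]
      linarith
    · push Not at he
      left
      apply fin
      have a1 : S ^ 2 ≤ (K + 1) * T := by rw [s2]; linarith
      have a2 : S ≤ (K + 1) * N * (u * |v|) := by
        have : S * S ≤ ((K + 1) * N * (u * |v|)) * S := by
          calc S * S = S ^ 2 := by ring
            _ ≤ (K + 1) * T := a1
            _ ≤ (K + 1) * (N * |v|) := by gcongr
            _ = ((K + 1) * N * |v|) * 1 := by ring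
            _ ≤ ((K + 1) * N * |v|) * (u * S) := by gcongr
            _ = _ := by ring
        exact le_of_mul_le_mul_right this (by linarith)
      calc w ≤ K * M ^ 2 * S := hw
        _ ≤ K * M ^ 2 * ((K + 1) * N * (u * |v|)) := by gcongr
        _ = _ := by rw [hE]; ring

/-- Transversal case. -/
lemma good_split {α γ : ℝ} (hα : α ≠ 0) (h0 : 0 < γ / α) (h1 : γ ≠ α) {K : ℝ} (hK : 0 ≤ K) :
    ∃ C₀ c₁ c₂ : ℝ, 0 ≤ C₀ ∧ ∀ x y w : ℝ, 0 ≤ w → w ≤ K * (|x| + |y|) → 1 ≤ K * (|x| + |y|) →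
      (w * Real.sqrt (1 + |x|) ≤ K * (|x| + |y|) ∨ w * Real.sqrt (1 + |y|) ≤ K * (|x| + |y|)) →
      Good C₀ α γ c₁ c₂ x y w := by
  set q := Real.sqrt (γ / α) with hq
  have q0 : 0 < q := Real.sqrt_pos.2 h0
  have q2 : γ = q ^ 2 * α := by rw [hq, Real.sq_sqrt h0.le]; field_simp
  have q1 : q - 1 ≠ 0 := by
    intro h
    apply h1
    have : q = 1 := by linarith
    rw [q2, this]; ring
  have q3 : q + 1 ≠ 0 := by positivity
  set c₁ := q / (q - 1) with hc₁
  set c₂ := q / (q + 1) with hc₂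
  have hc₁0 : c₁ ≠ 0 := div_ne_zero q0.ne' q1
  have hc₂0 : c₂ ≠ 0 := div_ne_zero q0.ne' q3
  have hcc : c₂ - c₁ ≠ 0 := by
    have : c₂ - c₁ = -2 * q / ((q + 1) * (q - 1)) := by rw [hc₁, hc₂]; field_simp; ring
    rw [this]
    exact div_ne_zero (by simpa using q0.ne') (mul_ne_zero q3 q1)
  set κ := α * (1 - q ^ 2) with hκ
  have hκ0 : κ ≠ 0 := by
    have : κ = -α * ((q - 1) * (q + 1)) := by rw [hκ]; ring
    rw [this]
    exact mul_ne_zero (neg_ne_zero.2 hα) (mul_ne_zero q1 q3)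
  have fac : ∀ x y : ℝ, α * y ^ 2 - γ * (y - x) ^ 2 = κ * (y - c₁ * x) * (y - c₂ * x) := by
    intro x y
    rw [q2, hκ, hc₁, hc₂]; field_simp; ring
  set N₀ := (1 + |c₁| + |c₂|) / |c₂ - c₁| with hN₀
  have hN₀0 : 0 ≤ N₀ := by positivity
  have hsum : ∀ x y : ℝ, |x| + |y| ≤ N₀ * (|y - c₁ * x| + |y - c₂ * x|) := by
    intro x y
    have pc : 0 < |c₂ - c₁| := abs_pos.2 hcc
    rw [hN₀, div_mul_eq_mul_div, le_div_iff₀ pc]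
    have a1 : |x| * |c₂ - c₁| ≤ |y - c₁ * x| + |y - c₂ * x| := by
      calc |x| * |c₂ - c₁| = |(y - c₁ * x) - (y - c₂ * x)| := by rw [← abs_mul]; ring_nf
        _ ≤ _ := abs_sub _ _
    have a2 : |y| * |c₂ - c₁| ≤ |c₂| * |y - c₁ * x| + |c₁| * |y - c₂ * x| := by
      calc |y| * |c₂ - c₁| = |c₂ * (y - c₁ * x) - c₁ * (y - c₂ * x)| := by
            rw [← abs_mul]; ring_nf
        _ ≤ |c₂ * (y - c₁ * x)| + |c₁ * (y - c₂ * x)| := abs_sub _ _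
        _ = _ := by rw [abs_mul, abs_mul]
    nlinarith [mul_nonneg (abs_nonneg c₁) (abs_nonneg (y - c₁ * x)),
      mul_nonneg (abs_nonneg c₂) (abs_nonneg (y - c₂ * x))]
  obtain ⟨A, hA, HA⟩ := good_half (N := 2 * N₀) hκ0 hc₁0 hK (by positivity)
  obtain ⟨B, hB, HB⟩ := good_half (N := 2 * N₀) hκ0 hc₂0 hK (by positivity)
  refine ⟨A + B, c₁, c₂, by positivity, fun x y w w0 g1 g2 g3 => ?_⟩
  have hs := hsum x y
  rcases le_total |y - c₁ * x| |y - c₂ * x| with h | h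
  · refine Good.mono (C₀ := A) ?_ (by linarith)
    have := HA x y (y - c₂ * x) w w0 g1 g2 g3 (by nlinarith)
    unfold Good
    rw [fac]
    rcases this with h | h
    · exact Or.inl h
    · exact Or.inr ⟨h.1, Or.inl h.2⟩
  · refine Good.mono (C₀ := B) ?_ (by linarith)
    have := HB x y (y - c₁ * x) w w0 g1 g2 g3 (by nlinarith)
    unfold Good
    rw [fac]
    rcases this with h | h
    · refine Or.inl (h.trans_eq ?_)
      congr 2; ring
    · exact Or.inr ⟨h.1, Or.inr h.2⟩

lemma WH_high {ξ ξ₁ : ℝ} (h : 1 ≤ |ξ₁| ∧ 1 ≤ |ξ - ξ₁|) :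
    WH ξ ξ₁ * Real.sqrt (1 + |ξ|) = min 1 |ξ| * (2 + |ξ₁| + |ξ - ξ₁|) := by
  have : 0 < Real.sqrt (1 + |ξ|) := Real.sqrt_pos.2 (by positivity)
  rw [WH, if_pos h]; field_simp

lemma WH_low {ξ ξ₁ : ℝ} (h : ¬ (1 ≤ |ξ₁| ∧ 1 ≤ |ξ - ξ₁|)) : WH ξ ξ₁ = 0 := by
  rw [WH, if_neg h]

lemma WH_le {ξ ξ₁ : ℝ} : WH ξ ξ₁ ≤ WH ξ ξ₁ * Real.sqrt (1 + |ξ|) :=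
  le_mul_of_one_le_right (WH_nonneg _ _) (sqrt_facts ξ).1

/-- Goodness of the high frequency weight. -/
lemma good_high {α γ : ℝ} (hα : α ≠ 0) (hγ : γ ≠ 0) :
    ∃ C₀ c₁ c₂ : ℝ, 0 ≤ C₀ ∧ ∀ x y, Good C₀ α γ c₁ c₂ x y (WH x y) ∧
      Good C₀ α γ c₁ c₂ x y (WH y x) := by
  have triv : ∀ C₀ c₁ c₂ x y : ℝ, 0 ≤ C₀ → Good C₀ α γ c₁ c₂ x y 0 := fun C₀ c₁ c₂ x y h =>
    Or.inl (by positivity)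
  -- basic facts in the high region
  have basic : ∀ ξ ξ₁ : ℝ, (1 ≤ |ξ₁| ∧ 1 ≤ |ξ - ξ₁|) →
      WH ξ ξ₁ * Real.sqrt (1 + |ξ|) ≤ 2 + |ξ₁| + |ξ - ξ₁| ∧
      WH ξ ξ₁ * Real.sqrt (1 + |ξ|) ≤ |ξ| * (2 + |ξ₁| + |ξ - ξ₁|) ∧
      |ξ - ξ₁| ≤ |ξ| + |ξ₁| := by
    intro ξ ξ₁ h
    have p : 0 ≤ 2 + |ξ₁| + |ξ - ξ₁| := by positivity
    rw [WH_high h]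
    refine ⟨?_, ?_, abs_sub _ _⟩
    · exact (mul_le_mul_of_nonneg_right (min_le_left _ _) p).trans_eq (one_mul _)
    · exact mul_le_mul_of_nonneg_right (min_le_right _ _) p
  rcases lt_trichotomy (γ / α) 0 with h | h | h
  · -- definite
    have hαγ : α * γ < 0 := by
      have : α * γ = α ^ 2 * (γ / α) := by field_simp
      rw [this]
      have : 0 < α ^ 2 := by positivity
      nlinarith
    have pα : 0 < |α| := abs_pos.2 hα
    have pγ : 0 < |γ| := abs_pos.2 hγ
    have hφ : ∀ x y : ℝ, |α * y ^ 2 - γ * (y - x) ^ 2| = |α| * y ^ 2 + |γ| * (y - x) ^ 2 := by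
      intro x y
      rcases lt_or_gt_of_ne hα with h | h
      · have : 0 < γ := by nlinarith
        rw [abs_of_neg h, abs_of_pos this, abs_of_nonpos (by nlinarith [sq_nonneg y, sq_nonneg (y - x)])]
        ring
      · have : γ < 0 := by nlinarith
        rw [abs_of_pos h, abs_of_neg this, abs_of_nonneg (by nlinarith [sq_nonneg y, sq_nonneg (y - x)])]
        ring
    have key : ∀ x y w : ℝ, w ≤ 8 * (y ^ 2 + (y - x) ^ 2) →
        Good (8 / |α| + 8 / |γ|) α γ 0 0 x y w := by
      intro x y w hw
      left
      rw [hφ]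
      have e : (8 / |α| + 8 / |γ|) * (|α| * y ^ 2 + |γ| * (y - x) ^ 2) =
        8 * y ^ 2 + 8 * (y - x) ^ 2 + (8 / |γ| * (|α| * y ^ 2) + 8 / |α| * (|γ| * (y - x) ^ 2)) := by
        field_simp; ring
      rw [e]
      have : 0 ≤ 8 / |γ| * (|α| * y ^ 2) + 8 / |α| * (|γ| * (y - x) ^ 2) := by positivity
      linarith
    refine ⟨8 / |α| + 8 / |γ|, 0, 0, by positivity, fun x y => ⟨?_, ?_⟩⟩
    · by_cases hh : 1 ≤ |y| ∧ 1 ≤ |x - y|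
      · obtain ⟨b1, b2, b3⟩ := basic x y hh
        have b4 := WH_le (ξ := x) (ξ₁ := y)
        apply key
        rw [← sq_abs y, ← sq_abs (y - x), abs_sub_comm y x]
        nlinarith [hh.1, hh.2]
      · rw [WH_low hh]; exact triv _ _ _ _ _ (by positivity)
    · by_cases hh : 1 ≤ |x| ∧ 1 ≤ |y - x|
      · obtain ⟨b1, b2, b3⟩ := basic y x hh
        have b4 := WH_le (ξ := y) (ξ₁ := x)
        have b5 : |x| ≤ |y| + |y - x| := by
          calc |x| = |y - (y - x)| := by ring_nf
            _ ≤ _ := abs_sub _ _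
        apply key
        rw [← sq_abs y, ← sq_abs (y - x)]
        nlinarith [hh.1, hh.2, sq_nonneg (|y| - 1)]
      · rw [WH_low hh]; exact triv _ _ _ _ _ (by positivity)
  · exact absurd h (div_ne_zero hγ hα)
  · by_cases he : γ = α
    · subst he
      obtain ⟨C₀, hC₀, H⟩ := good_eq (K := 6) hα (by norm_num)
      refine ⟨C₀, 1 / 2, 1 / 2, hC₀, fun x y => ⟨?_, ?_⟩⟩
      · by_cases hh : 1 ≤ |y| ∧ 1 ≤ |x - y|
        · obtain ⟨b1, b2, b3⟩ := basic x y hh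
          have b4 := WH_le (ξ := x) (ξ₁ := y)
          obtain ⟨s1, s2⟩ := sqrt_facts x
          have hx := abs_nonneg x
          have hy := abs_nonneg y
          apply H
          · linarith
          · nlinarith
          · intro hd
            have a1 : |y| ≤ (|x| + 1) / 2 := by
              rw [abs_le] at hd ⊢
              constructor <;> linarith [le_abs_self x, neg_abs_le x]
            have a2 : |x - y| ≤ (|x| + 1) / 2 := by
              rw [abs_le] at hd ⊢
              constructor <;> linarith [le_abs_self x, neg_abs_le x]
            have : WH x y * Real.sqrt (1 + |x|) ≤ (6 * Real.sqrt (1 + |x|)) * Real.sqrt (1 + |x|) := by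
              nlinarith
            exact le_of_mul_le_mul_right this (by linarith)
        · rw [WH_low hh]; exact triv _ _ _ _ _ hC₀
      · by_cases hh : 1 ≤ |x| ∧ 1 ≤ |y - x|
        · obtain ⟨b1, b2, b3⟩ := basic y x hh
          have b4 := WH_le (ξ := y) (ξ₁ := x)
          obtain ⟨s1, s2⟩ := sqrt_facts x
          obtain ⟨r1, r2⟩ := sqrt_facts y
          have hx := abs_nonneg x
          have hy := abs_nonneg y
          have h0 := WH_nonneg y x
          apply H
          · linarith
          · nlinarith
          · intro hd
            have a1 : (|x| - 1) / 2 ≤ |y| := by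
              have : |x| ≤ |2 * y| + |2 * y - x| := by
                calc |x| = |2 * y - (2 * y - x)| := by ring_nf
                  _ ≤ _ := abs_sub _ _
              rw [abs_mul, abs_of_pos (by norm_num : (0:ℝ) < 2)] at this
              linarith
            have a2 : |y - x| ≤ (|x| + 1) / 2 := by
              rw [abs_le] at hd ⊢
              constructor <;> linarith [le_abs_self x, neg_abs_le x]
            have a3 : Real.sqrt (1 + |x|) ≤ 2 * Real.sqrt (1 + |y|) := by
              have : Real.sqrt (1 + |x|) ^ 2 ≤ (2 * Real.sqrt (1 + |y|)) ^ 2 := by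
                rw [mul_pow, s2, r2]; linarith
              exact (le_abs_self _).trans (abs_le_of_sq_le_sq this (by positivity))
            have a4 := mul_le_mul_of_nonneg_left a3 h0
            have : WH y x * Real.sqrt (1 + |x|) ≤ (6 * Real.sqrt (1 + |x|)) * Real.sqrt (1 + |x|) := by
              nlinarith
            exact le_of_mul_le_mul_right this (by linarith)
        · rw [WH_low hh]; exact triv _ _ _ _ _ hC₀
    · obtain ⟨C₀, c₁, c₂, hC₀, H⟩ := good_split (K := 4) hα h he (by norm_num)
      refine ⟨C₀, c₁, c₂, hC₀, fun x y => ⟨?_, ?_⟩⟩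
      · by_cases hh : 1 ≤ |y| ∧ 1 ≤ |x - y|
        · obtain ⟨b1, b2, b3⟩ := basic x y hh
          have b4 := WH_le (ξ := x) (ξ₁ := y)
          have hx := abs_nonneg x
          exact H x y _ (WH_nonneg _ _) (by linarith [hh.1]) (by linarith [hh.1])
            (Or.inl (by linarith [hh.1]))
        · rw [WH_low hh]; exact triv _ _ _ _ _ hC₀
      · by_cases hh : 1 ≤ |x| ∧ 1 ≤ |y - x|
        · obtain ⟨b1, b2, b3⟩ := basic y x hh
          have b4 := WH_le (ξ := y) (ξ₁ := x)
          have hy := abs_nonneg y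
          exact H x y _ (WH_nonneg _ _) (by linarith [hh.1]) (by linarith [hh.1])
            (Or.inr (by linarith [hh.1]))
        · rw [WH_low hh]; exact triv _ _ _ _ _ hC₀

/-- All three weight estimates, for the scaled weights. -/
lemma good_all {a₁ a₂ : ℝ} (ha₁ : a₁ ≠ 0) (ha₂ : a₂ ≠ 0) {C : ℝ} (hC : 0 ≤ C) :
    ∃ C₀ c₁ c₂ d₁ d₂ e₁ e₂ : ℝ, 0 ≤ C₀ ∧
      (∀ x y, Good C₀ a₁ a₂ c₁ c₂ x y (C * (WH x y + WL x y))) ∧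
      (∀ x y, Good C₀ a₂ a₂ d₁ d₂ x y (C * WH y x)) ∧
      (∀ x y, Good C₀ a₂ a₁ e₁ e₂ x y (C * WH y x)) := by
  obtain ⟨A, c₁, c₂, hA, HA⟩ := good_high ha₁ ha₂
  obtain ⟨A', hA', HA'⟩ := good_low ha₁ ha₂ c₁ c₂
  obtain ⟨B, d₁, d₂, hB, HB⟩ := good_high ha₂ ha₂
  obtain ⟨D, e₁, e₂, hD, HD⟩ := good_high ha₂ ha₁
  refine ⟨(C + 1) * (A + A' + B + D), c₁, c₂, d₁, d₂, e₁, e₂, by positivity,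
    fun x y => ?_, fun x y => ?_, fun x y => ?_⟩
  · refine Good.scale ?_ (by positivity) hC
    by_cases hh : 1 ≤ |y| ∧ 1 ≤ |x - y|
    · have : WL x y = 0 := by simp [WL, hh]
      rw [this, add_zero]
      exact (HA x y).1.mono (by linarith)
    · rw [WH_low hh, zero_add]
      exact (HA' x y).mono (by linarith)
  · exact Good.scale ((HB x y).2.mono (by linarith)) (by positivity) hC
  · exact Good.scale ((HD x y).2.mono (by linarith)) (by positivity) hC

/-- The square root of the weight in the Gevrey–Bourgain norm. -/
noncomputable def wt (a σ s b : ℝ) (p : ℝ × ℝ) : ℝ :=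
  Real.exp (σ * |p.2|) * (1 + |p.2|) ^ s * (1 + |p.1 - a * p.2 ^ 3|) ^ b

lemma wt_pos (a σ s b : ℝ) (p : ℝ × ℝ) : 0 < wt a σ s b p := by unfold wt; positivity

lemma br_meas {f : ℝ × ℝ → ℝ} (hf : Measurable f) (β : ℝ) :
    Measurable (fun p => (1 + |f p|) ^ β) := by
  have := (bracket_meas (-β)).comp hf
  simpa [Function.comp_def] using this

lemma wt_meas (a σ s b : ℝ) : Measurable (wt a σ s b) := by
  unfold wt
  have h1 : Measurable (fun p : ℝ × ℝ => Real.exp (σ * |p.2|)) :=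
    Continuous.measurable (by fun_prop)
  have h2 := br_meas (f := fun p : ℝ × ℝ => p.2) (by fun_prop) s
  have h3 := br_meas (f := fun p : ℝ × ℝ => p.1 - a * p.2 ^ 3) (by fun_prop) b
  exact (h1.mul h2).mul h3

lemma integrand_eq (a σ s b τ ξ : ℝ) (z : ℂ) :
    ENNReal.ofReal (Real.exp (2 * σ * |ξ|) * (1 + |ξ|) ^ (2 * s) *
        (1 + |τ - a * ξ ^ 3|) ^ (2 * b) * ‖z‖ ^ 2)
      = (ENNReal.ofReal (wt a σ s b (τ, ξ)) * ‖z‖ₑ) ^ 2 := by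
  have sq2 : ∀ x r : ℝ, 0 ≤ x → x ^ (2 * r) = (x ^ r) ^ 2 := by
    intro x r hx
    rw [← Real.rpow_natCast, ← Real.rpow_mul hx]; congr 1; push_cast; ring
  rw [← ofReal_norm, ← ENNReal.ofReal_mul (wt_pos _ _ _ _ _).le,
    ← ENNReal.ofReal_pow (by have := (wt_pos a σ s b (τ, ξ)).le; positivity),
    sq2 _ _ (by positivity), sq2 _ _ (by positivity)]
  congr 1
  have : Real.exp (2 * σ * |ξ|) = Real.exp (σ * |ξ|) ^ 2 := by
    rw [← Real.exp_nat_mul]; congr 1; push_cast; ring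
  rw [this, wt]
  ring

lemma XNorm_eq (a σ s b : ℝ) (f : SchwartzMap (ℝ × ℝ) ℂ) :
    XNorm a σ s b (fun t x => f (t, x)) =
      (∫⁻ p : ℝ × ℝ, (ENNReal.ofReal (wt a σ s b p) *
        ‖FT2 (fun t x => f (t, x)) p.1 p.2‖ₑ) ^ 2) ^ (1 / 2 : ℝ) := by
  have m1 := wt_meas a σ s b
  have m2 := measurable_FT2 f
  have m3 : Measurable (fun p : ℝ × ℝ => (ENNReal.ofReal (wt a σ s b p) *
        ‖FT2 (fun t x => f (t, x)) p.1 p.2‖ₑ) ^ 2) := by fun_prop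
  rw [Measure.volume_eq_prod, lintegral_prod _ m3.aemeasurable, XNorm]
  simp only [integrand_eq]

lemma sqrt_three {k a b c : ℝ} (ha : 0 ≤ a) (hb : 0 ≤ b) (hc : 0 ≤ c) (h : k ^ 2 ≤ a + b + c) :
    k ≤ Real.sqrt a + Real.sqrt b + Real.sqrt c := by
  have h0 : k ^ 2 ≤ (Real.sqrt a + Real.sqrt b + Real.sqrt c) ^ 2 := by
    have := Real.sq_sqrt ha
    have := Real.sq_sqrt hb
    have := Real.sq_sqrt hc
    have := mul_nonneg (Real.sqrt_nonneg a) (Real.sqrt_nonneg b)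
    have := mul_nonneg (Real.sqrt_nonneg a) (Real.sqrt_nonneg c)
    have := mul_nonneg (Real.sqrt_nonneg b) (Real.sqrt_nonneg c)
    nlinarith
  exact (le_abs_self _).trans (abs_le_of_sq_le_sq h0 (by positivity))

lemma ofReal_sqrt_sq {a : ℝ} (ha : 0 ≤ a) :
    ENNReal.ofReal (Real.sqrt a) ^ 2 = ENNReal.ofReal a := by
  rw [← ENNReal.ofReal_pow (Real.sqrt_nonneg _), Real.sq_sqrt ha]

/-- First kernel. -/
noncomputable def T0 (a₁ a₂ C β : ℝ) (p q : ℝ × ℝ) : ℝ :=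
  (C * (WH p.2 q.2 + WL p.2 q.2)) * ((1 + |q.1 - a₁ * q.2 ^ 3|) ^ (-β) *
    (1 + |p.1 - q.1 - a₂ * (p.2 - q.2) ^ 3|) ^ (-β))

/-- Second kernel. -/
noncomputable def T1 (a₂ C β : ℝ) (p q : ℝ × ℝ) : ℝ :=
  (C * WH p.2 q.2) * ((1 + |p.1 - a₂ * p.2 ^ 3|) ^ (-β) *
    (1 + |p.1 - q.1 - a₂ * (p.2 - q.2) ^ 3|) ^ (-β))

/-- Third kernel. -/
noncomputable def T2 (a₁ a₂ C β : ℝ) (p q : ℝ × ℝ) : ℝ :=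
  (C * WH p.2 q.2) * ((1 + |p.1 - a₂ * p.2 ^ 3|) ^ (-β) *
    (1 + |q.1 - a₁ * q.2 ^ 3|) ^ (-β))

lemma br_meas2 {f : (ℝ × ℝ) × (ℝ × ℝ) → ℝ} (hf : Measurable f) (β : ℝ) :
    Measurable (fun p => (1 + |f p|) ^ (-β)) :=
  (bracket_meas β).comp hf

lemma WH_meas2 : Measurable (fun z : (ℝ × ℝ) × (ℝ × ℝ) => WH z.1.2 z.2.2) :=
  WH_meas.comp (by fun_prop : Measurable fun z : (ℝ × ℝ) × (ℝ × ℝ) => (z.1.2, z.2.2))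

lemma WL_meas2 : Measurable (fun z : (ℝ × ℝ) × (ℝ × ℝ) => WL z.1.2 z.2.2) :=
  WL_meas.comp (by fun_prop : Measurable fun z : (ℝ × ℝ) × (ℝ × ℝ) => (z.1.2, z.2.2))

lemma T0_meas (a₁ a₂ C β : ℝ) :
    Measurable (fun z : (ℝ × ℝ) × (ℝ × ℝ) => T0 a₁ a₂ C β z.1 z.2) := by
  have h1 := WH_meas2
  have h2 := WL_meas2
  have h3 := br_meas2 (f := fun z => z.2.1 - a₁ * z.2.2 ^ 3) (by fun_prop) β
  have h4 := br_meas2 (f := fun z => z.1.1 - z.2.1 - a₂ * (z.1.2 - z.2.2) ^ 3) (by fun_prop) β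
  exact ((h1.add h2).const_mul C).mul (h3.mul h4)

lemma T1_meas (a₂ C β : ℝ) :
    Measurable (fun z : (ℝ × ℝ) × (ℝ × ℝ) => T1 a₂ C β z.1 z.2) := by
  have h1 := WH_meas2
  have h3 := br_meas2 (f := fun z => z.1.1 - a₂ * z.1.2 ^ 3) (by fun_prop) β
  have h4 := br_meas2 (f := fun z => z.1.1 - z.2.1 - a₂ * (z.1.2 - z.2.2) ^ 3) (by fun_prop) β
  exact (h1.const_mul C).mul (h3.mul h4)

lemma T2_meas (a₁ a₂ C β : ℝ) :
    Measurable (fun z : (ℝ × ℝ) × (ℝ × ℝ) => T2 a₁ a₂ C β z.1 z.2) := by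
  have h1 := WH_meas2
  have h3 := br_meas2 (f := fun z => z.1.1 - a₂ * z.1.2 ^ 3) (by fun_prop) β
  have h4 := br_meas2 (f := fun z => z.2.1 - a₁ * z.2.2 ^ 3) (by fun_prop) β
  exact (h1.const_mul C).mul (h3.mul h4)

lemma T0_nonneg {a₁ a₂ C β : ℝ} (hC : 0 ≤ C) (p q : ℝ × ℝ) : 0 ≤ T0 a₁ a₂ C β p q := by
  have := WH_nonneg p.2 q.2
  have := WL_nonneg p.2 q.2
  unfold T0; positivity

lemma T1_nonneg {a₂ C β : ℝ} (hC : 0 ≤ C) (p q : ℝ × ℝ) : 0 ≤ T1 a₂ C β p q := by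
  have := WH_nonneg p.2 q.2
  unfold T1; positivity

lemma T2_nonneg {a₁ a₂ C β : ℝ} (hC : 0 ≤ C) (p q : ℝ × ℝ) : 0 ≤ T2 a₁ a₂ C β p q := by
  have := WH_nonneg p.2 q.2
  unfold T2; positivity

/-- Bilinear estimate (3.3): for `a₁, a₂ ≠ 0` with `a₂/a₁ < 0`, `a₂/a₁ = 1` or
`a₂/a₁ > 4`, and `s > −3/4`, there exist `b ∈ (1/2,1)`, `ε > 0` and `C > 0`
such that for all `σ ≥ 0`, all `b' ∈ [b, b+ε)` and all Schwartz `f, g`: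
`‖∂_x(fg)‖_{X_{a₂}^{σ,s,b'−1}} ≤ C ‖f‖_{X_{a₁}^{σ,s,b}} ‖g‖_{X_{a₂}^{σ,s,b}}`. -/
theorem bilinear_uv_div (a₁ a₂ s : ℝ) (ha₁ : a₁ ≠ 0) (ha₂ : a₂ ≠ 0)
    (hratio : a₂ / a₁ < 0 ∨ a₂ / a₁ = 1 ∨ 4 < a₂ / a₁) (hs : -(3/4) < s) :
    ∃ b ∈ Set.Ioo (1/2 : ℝ) 1, ∃ ε : ℝ, 0 < ε ∧ ∃ C : ℝ, 0 < C ∧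
      ∀ σ : ℝ, 0 ≤ σ → ∀ b' ∈ Set.Ico b (b + ε),
        ∀ f g : SchwartzMap (ℝ × ℝ) ℂ,
          XNorm a₂ σ s (b' - 1) (fun t x => deriv (fun y => f (t, y) * g (t, y)) x) ≤
            ENNReal.ofReal C *
              (XNorm a₁ σ s b (fun t x => f (t, x)) * XNorm a₂ σ s b (fun t x => g (t, x))) := by
  obtain ⟨δ, hδ, hδ', hδs⟩ : ∃ δ : ℝ, 0 < δ ∧ δ ≤ 1 / 20 ∧ -(3 / 4) + 3 / 2 * δ ≤ s := by
    refine ⟨min (1 / 20) (2 / 3 * (s + 3 / 4)), lt_min (by norm_num) (by linarith),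
      min_le_left _ _, ?_⟩
    have := min_le_right (1 / 20) (2 / 3 * (s + 3 / 4))
    linarith
  obtain ⟨C, hC, hpt⟩ := pointwise ha₁ ha₂ hratio hδ hδ' hδs
  obtain ⟨C₀, c₁, c₂, d₁, d₂, e₁, e₂, hC₀, G0, G1, G2⟩ := good_all ha₁ ha₂ hC.le
  set β := 1 + δ / 2 with hβdef
  have hβ : 1 < β := by linarith
  set b := 1 / 2 + δ / 4 with hb
  set Bd := ENNReal.ofReal (2 ^ β) * (2 * JI β) *
        (ENNReal.ofReal C₀ * (4 * JI β) + 4 * ENNReal.ofReal (C₀ ^ 2)) with hBd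
  have hJ := (JI_lt_top hβ).ne
  have hBdtop : Bd ≠ ⊤ := by
    rw [hBd]
    refine ENNReal.mul_ne_top (ENNReal.mul_ne_top ENNReal.ofReal_ne_top
      (ENNReal.mul_ne_top (by simp) hJ)) (ENNReal.add_ne_top.2 ⟨ENNReal.mul_ne_top
      ENNReal.ofReal_ne_top (ENNReal.mul_ne_top (by simp) hJ), ENNReal.mul_ne_top (by simp)
      ENNReal.ofReal_ne_top⟩)
  have hCtop : 3 * Bd ^ (1 / 2 : ℝ) ≠ ⊤ :=
    ENNReal.mul_ne_top (by simp) (ENNReal.rpow_ne_top_of_nonneg (by norm_num) hBdtop)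
  refine ⟨b, ⟨by rw [hb]; linarith, by rw [hb]; linarith⟩, δ / 4, by linarith,
    (3 * Bd ^ (1 / 2 : ℝ)).toReal + 1, by positivity, ?_⟩
  intro σ hσ b' hb' f g
  have hb'2 : b' - 1 ≤ -((1 - δ) / 2) := by
    have := hb'.2
    linarith
  set F : ℝ × ℝ → ℝ≥0∞ := fun p => ENNReal.ofReal (wt a₁ σ s b p) *
        ‖FT2 (fun t x => f (t, x)) p.1 p.2‖ₑ with hF
  set G : ℝ × ℝ → ℝ≥0∞ := fun p => ENNReal.ofReal (wt a₂ σ s b p) *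
        ‖FT2 (fun t x => g (t, x)) p.1 p.2‖ₑ with hG
  have mF : Measurable F := by
    have m1 := wt_meas a₁ σ s b
    have m2 := measurable_FT2 f
    fun_prop
  have mG : Measurable G := by
    have m1 := wt_meas a₂ σ s b
    have m2 := measurable_FT2 g
    fun_prop
  set K₀ : ℝ × ℝ → ℝ × ℝ → ℝ≥0∞ := fun p q => ENNReal.ofReal (Real.sqrt (T0 a₁ a₂ C β p q)) with hK₀
  set K₁ : ℝ × ℝ → ℝ × ℝ → ℝ≥0∞ := fun p q => ENNReal.ofReal (Real.sqrt (T1 a₂ C β p q)) with hK₁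
  set K₂ : ℝ × ℝ → ℝ × ℝ → ℝ≥0∞ := fun p q => ENNReal.ofReal (Real.sqrt (T2 a₁ a₂ C β p q)) with hK₂
  have mK₀ : Measurable (Function.uncurry K₀) :=
    (Real.continuous_sqrt.measurable.comp (T0_meas a₁ a₂ C β)).ennreal_ofReal
  have mK₁ : Measurable (Function.uncurry K₁) :=
    (Real.continuous_sqrt.measurable.comp (T1_meas a₂ C β)).ennreal_ofReal
  have mK₂ : Measurable (Function.uncurry K₂) :=
    (Real.continuous_sqrt.measurable.comp (T2_meas a₁ a₂ C β)).ennreal_ofReal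
  have mWHl : ∀ x : ℝ, Measurable (fun y => WH x y) := fun x =>
    WH_meas.comp (by fun_prop : Measurable fun y : ℝ => (x, y))
  have mWHr : ∀ x : ℝ, Measurable (fun y => WH y x) := fun x =>
    WH_meas.comp (by fun_prop : Measurable fun y : ℝ => (y, x))
  have mWLl : ∀ x : ℝ, Measurable (fun y => WL x y) := fun x =>
    WL_meas.comp (by fun_prop : Measurable fun y : ℝ => (x, y))
  have b₀ : ∀ p, ∫⁻ q, K₀ p q ^ 2 ≤ Bd := by
    intro p
    have := kernel_bound hβ hC₀ a₁ a₂ c₁ c₂ p.1 p.2 (fun y => C * (WH p.2 y + WL p.2 y))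
      (((mWHl p.2).add (mWLl p.2)).const_mul C)
      (fun y => mul_nonneg hC.le (add_nonneg (WH_nonneg _ _) (WL_nonneg _ _))) (G0 p.2)
    refine le_trans (le_of_eq ?_) this
    refine lintegral_congr fun q => ?_
    simp only [hK₀]
    rw [ofReal_sqrt_sq (T0_nonneg hC.le p q), T0]
    have e : |p.1 - q.1 - a₂ * (p.2 - q.2) ^ 3| = |q.1 - p.1 - a₂ * (q.2 - p.2) ^ 3| := by
      rw [← abs_neg]; congr 1; ring
    rw [e]
  have b₁ : ∀ q, ∫⁻ p, K₁ p q ^ 2 ≤ Bd := by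
    intro q
    have := kernel_bound hβ hC₀ a₂ a₂ d₁ d₂ q.1 q.2 (fun y => C * WH y q.2)
      ((mWHr q.2).const_mul C) (fun y => mul_nonneg hC.le (WH_nonneg _ _)) (G1 q.2)
    refine le_trans (le_of_eq ?_) this
    refine lintegral_congr fun p => ?_
    simp only [hK₁]
    rw [ofReal_sqrt_sq (T1_nonneg hC.le p q), T1]
  have b₂ : ∀ z, ∫⁻ p, K₂ p (p - z) ^ 2 ≤ Bd := by
    intro z
    have := kernel_bound hβ hC₀ a₂ a₁ e₁ e₂ z.1 z.2 (fun y => C * WH y z.2)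
      ((mWHr z.2).const_mul C) (fun y => mul_nonneg hC.le (WH_nonneg _ _)) (G2 z.2)
    refine le_trans (le_of_eq ?_) this
    refine lintegral_congr fun p => ?_
    simp only [hK₂]
    rw [ofReal_sqrt_sq (T2_nonneg hC.le p _), T2]
    simp only [Prod.snd_sub, Prod.fst_sub]
    rw [WH_symm]
  have htri := lint_tri mK₀ mK₁ mK₂ Bd b₀ b₁ b₂ mF mG
  rw [XNorm_eq, XNorm_eq]
  change _ ≤ ENNReal.ofReal _ * ((∫⁻ p, F p ^ 2) ^ (1 / 2 : ℝ) * (∫⁻ p, G p ^ 2) ^ (1 / 2 : ℝ))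
  set I : ℝ × ℝ → ℝ≥0∞ := fun p => ∫⁻ q, (K₀ p q + K₁ p q + K₂ p q) * (F q * G (p - q)) with hI
  have mI : Measurable I := by
    have : Measurable (fun z : (ℝ × ℝ) × (ℝ × ℝ) =>
        (Function.uncurry K₀ z + Function.uncurry K₁ z + Function.uncurry K₂ z) *
          (F z.2 * G (z.1 - z.2))) := by fun_prop
    exact this.lintegral_prod_right'
  have point : ∀ τ ξ : ℝ, ENNReal.ofReal (wt a₂ σ s (b' - 1) (τ, ξ)) *
      ‖FT2 (fun t x => deriv (fun y => f (t, y) * g (t, y)) x) τ ξ‖ₑ ≤ I (τ, ξ) := by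
    intro τ ξ
    calc _ ≤ ENNReal.ofReal (wt a₂ σ s (b' - 1) (τ, ξ)) * (ENNReal.ofReal |ξ| *
          ∫⁻ p : ℝ × ℝ, ‖FT2 (fun t x => f (t, x)) p.1 p.2‖ₑ *
            ‖FT2 (fun t x => g (t, x)) (τ - p.1) (ξ - p.2)‖ₑ) := by
          gcongr
          exact FT2_deriv_mul_le f g τ ξ
      _ = ∫⁻ p : ℝ × ℝ, (ENNReal.ofReal (wt a₂ σ s (b' - 1) (τ, ξ)) * ENNReal.ofReal |ξ|) *
            (‖FT2 (fun t x => f (t, x)) p.1 p.2‖ₑ *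
            ‖FT2 (fun t x => g (t, x)) (τ - p.1) (ξ - p.2)‖ₑ) := by
          rw [lintegral_const_mul' _ _ (ENNReal.mul_ne_top ENNReal.ofReal_ne_top
            ENNReal.ofReal_ne_top), mul_assoc]
      _ ≤ _ := by
          refine lintegral_mono fun q => ?_
          simp only [hF, hG, Prod.fst_sub, Prod.snd_sub]
          have key : ENNReal.ofReal (wt a₂ σ s (b' - 1) (τ, ξ)) * ENNReal.ofReal |ξ| ≤
              (K₀ (τ, ξ) q + K₁ (τ, ξ) q + K₂ (τ, ξ) q) *
                (ENNReal.ofReal (wt a₁ σ s b q) * ENNReal.ofReal (wt a₂ σ s b ((τ, ξ) - q))) := by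
            simp only [hK₀, hK₁, hK₂]
            rw [← ENNReal.ofReal_add (Real.sqrt_nonneg _) (Real.sqrt_nonneg _),
              ← ENNReal.ofReal_add (by positivity) (Real.sqrt_nonneg _),
              ← ENNReal.ofReal_mul (wt_pos _ _ _ _ _).le,
              ← ENNReal.ofReal_mul (wt_pos _ _ _ _ _).le, ← ENNReal.ofReal_mul (by positivity)]
            apply ENNReal.ofReal_le_ofReal
            have h1 := hpt b' hb'2 τ ξ q.1 q.2
            have h2 := sqrt_three (T0_nonneg hC.le (τ, ξ) q) (T1_nonneg hC.le (τ, ξ) q)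
              (T2_nonneg hC.le (τ, ξ) q) h1
            have w1 := wt_pos a₁ σ s b q
            have w2 := wt_pos a₂ σ s b ((τ, ξ) - q)
            refine le_trans ?_ (mul_le_mul_of_nonneg_right h2 (mul_nonneg w1.le w2.le))
            have hexp : Real.exp (σ * |ξ|) ≤ Real.exp (σ * |q.2|) * Real.exp (σ * |ξ - q.2|) := by
              rw [← Real.exp_add, ← mul_add]
              apply Real.exp_le_exp.2
              refine mul_le_mul_of_nonneg_left ?_ hσ
              calc |ξ| = |q.2 + (ξ - q.2)| := by ring_nf
                _ ≤ _ := abs_add_le _ _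
            simp only [wt, Prod.fst_sub, Prod.snd_sub]
            have inv : ∀ x r : ℝ, x ^ (-r) * x ^ r = 1 ∨ ¬ 0 < x := by
              intro x r
              by_cases hx : 0 < x
              · left; rw [← Real.rpow_add hx]; simp
              · right; exact hx
            have i1 := (inv (1 + |q.2|) s).resolve_right (not_not.2 (by positivity))
            have i2 := (inv (1 + |ξ - q.2|) s).resolve_right (not_not.2 (by positivity))
            have i3 := (inv (1 + |q.1 - a₁ * q.2 ^ 3|) b).resolve_right (not_not.2 (by positivity))
            have i4 := (inv (1 + |τ - q.1 - a₂ * (ξ - q.2) ^ 3|) b).resolve_right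
              (not_not.2 (by positivity))
            set A := |ξ| * (1 + |ξ|) ^ s * (1 + |τ - a₂ * ξ ^ 3|) ^ (b' - 1) with hA
            have hA0 : 0 ≤ A := by positivity
            calc _ = A * Real.exp (σ * |ξ|) := by rw [hA]; ring
              _ ≤ A * (Real.exp (σ * |q.2|) * Real.exp (σ * |ξ - q.2|)) := by gcongr
              _ = A * (Real.exp (σ * |q.2|) * Real.exp (σ * |ξ - q.2|)) *
                  (((1 + |q.2|) ^ (-s) * (1 + |q.2|) ^ s) *
                  ((1 + |ξ - q.2|) ^ (-s) * (1 + |ξ - q.2|) ^ s) *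
                  ((1 + |q.1 - a₁ * q.2 ^ 3|) ^ (-b) * (1 + |q.1 - a₁ * q.2 ^ 3|) ^ b) *
                  ((1 + |τ - q.1 - a₂ * (ξ - q.2) ^ 3|) ^ (-b) *
                    (1 + |τ - q.1 - a₂ * (ξ - q.2) ^ 3|) ^ b)) := by
                  rw [i1, i2, i3, i4]; ring
              _ = _ := by rw [hA]; ring
          calc _ ≤ _ := mul_le_mul_left key _
            _ = _ := by
              ring
  calc _ = (∫⁻ τ : ℝ, ∫⁻ ξ : ℝ, (ENNReal.ofReal (wt a₂ σ s (b' - 1) (τ, ξ)) *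
      ‖FT2 (fun t x => deriv (fun y => f (t, y) * g (t, y)) x) τ ξ‖ₑ) ^ 2) ^ (1 / 2 : ℝ) := by
        rw [XNorm]; simp only [integrand_eq]
    _ ≤ (∫⁻ τ : ℝ, ∫⁻ ξ : ℝ, I (τ, ξ) ^ 2) ^ (1 / 2 : ℝ) := by
        refine ENNReal.rpow_le_rpow (lintegral_mono fun τ => lintegral_mono fun ξ => ?_) (by norm_num)
        exact pow_le_pow_left₀ zero_le (point τ ξ) 2
    _ = (∫⁻ p, I p ^ 2) ^ (1 / 2 : ℝ) := by
        rw [Measure.volume_eq_prod, lintegral_prod _ (mI.pow_const 2).aemeasurable]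
    _ ≤ 3 * Bd ^ (1 / 2 : ℝ) * ((∫⁻ p, F p ^ 2) ^ (1 / 2 : ℝ) * (∫⁻ p, G p ^ 2) ^ (1 / 2 : ℝ)) := htri
    _ ≤ _ := by
        gcongr
        rw [← ENNReal.ofReal_toReal hCtop]
        apply ENNReal.ofReal_le_ofReal
        rw [ENNReal.ofReal_toReal hCtop]
        linarith
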